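/- Let n ≥ 3 be an integer and let u : ℝⁿ → ℝ be a smooth positive function satisfying −Δu = n(n−2) u^{(n+2)/(n−2)} on all of ℝⁿ. Then there exist λ > 0 and x₀ ∈ ℝⁿ such that u(x) = λ^{(n−2)/2} (1 + λ²|x−x₀|²)^{−(n−2)/2} for all x ∈ ℝⁿ. -/

import Mathlib

/-- The Euclidean Laplacian `Δu = ∑ i, ∂²u/∂xᵢ²` of a function on `ℝⁿ`. -/
noncomputable def lap {n : ℕ} (f : EuclideanSpace ℝ (Fin n) → ℝ)
    (x : EuclideanSpace ℝ (Fin n)) : ℝ :=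
  ∑ i, fderiv ℝ (fun y => fderiv ℝ f y (EuclideanSpace.single i 1)) x
    (EuclideanSpace.single i 1)

namespace CritRig
open Filter Topology Set
variable {n : ℕ}

local notation "𝔼" => EuclideanSpace ℝ (Fin n)

/-- standard basis vector -/
noncomputable abbrev ee (i : Fin n) : EuclideanSpace ℝ (Fin n) := EuclideanSpace.single i 1

lemma line_hasDerivAt (x e : 𝔼) (t : ℝ) : HasDerivAt (fun t : ℝ => x + t • e) e t := by
  simpa using ((hasDerivAt_id t).smul_const e).const_add x

lemma second_hasDerivAt {f : 𝔼 → ℝ} {x : 𝔼} (hf : ContDiffAt ℝ 2 f x) (e : 𝔼) :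
    (∀ᶠ t in 𝓝 (0:ℝ), HasDerivAt (fun t : ℝ => f (x + t • e)) (fderiv ℝ f (x + t • e) e) t) ∧
    HasDerivAt (fun t : ℝ => fderiv ℝ f (x + t • e) e)
      (fderiv ℝ (fun y => fderiv ℝ f y e) x e) 0 := by
  have hc : Tendsto (fun t : ℝ => x + t • e) (𝓝 0) (𝓝 x) := by
    have : Continuous (fun t : ℝ => x + t • e) := by fun_prop
    simpa using this.tendsto 0
  constructor
  · have h1 : ∀ᶠ y in 𝓝 x, DifferentiableAt ℝ f y :=
      (hf.eventually (by simp)).mono fun y hy => hy.differentiableAt (by simp)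
    filter_upwards [hc.eventually h1] with t ht
    exact ht.hasFDerivAt.comp_hasDerivAt t (line_hasDerivAt x e t)
  · have h2 : DifferentiableAt ℝ (fun y => fderiv ℝ f y e) x := by
      have : DifferentiableAt ℝ (fderiv ℝ f) x :=
        (hf.fderiv_right (m := 1) (by norm_num)).differentiableAt (by simp)
      exact this.clm_apply (differentiableAt_const e)
    have h3 : HasFDerivAt (fun y => fderiv ℝ f y e) (fderiv ℝ (fun y => fderiv ℝ f y e) x)
      (x + (0:ℝ) • e) := by simpa using h2.hasFDerivAt
    exact h3.comp_hasDerivAt 0 (line_hasDerivAt x e 0)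

lemma lap_eq_sum {f : 𝔼 → ℝ} {x : 𝔼} (hf : ContDiffAt ℝ 2 f x) (d : Fin n → ℝ → ℝ)
    (s : Fin n → ℝ)
    (h1 : ∀ i, ∀ᶠ t in 𝓝 (0:ℝ), HasDerivAt (fun t : ℝ => f (x + t • ee i)) (d i t) t)
    (h2 : ∀ i, HasDerivAt (d i) (s i) 0) : lap f x = ∑ i, s i := by
  unfold lap
  refine Finset.sum_congr rfl fun i _ => ?_
  obtain ⟨h3, h4⟩ := second_hasDerivAt hf (ee i)
  have : d i =ᶠ[𝓝 0] (fun t : ℝ => fderiv ℝ f (x + t • ee i) (ee i)) := by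
    filter_upwards [h1 i, h3] with t a b using a.unique b
  exact h4.unique ((h2 i).congr_of_eventuallyEq this.symm)

lemma lap_add_smul {f g : 𝔼 → ℝ} {x : 𝔼} (hf : ContDiffAt ℝ 2 f x) (hg : ContDiffAt ℝ 2 g x)
    (c : ℝ) : lap (fun y => f y + c * g y) x = lap f x + c * lap g x := by
  have : lap (fun y => f y + c * g y) x = ∑ i, (fderiv ℝ (fun y => fderiv ℝ f y (ee i)) x (ee i)
      + c * fderiv ℝ (fun y => fderiv ℝ g y (ee i)) x (ee i)) := by
    refine lap_eq_sum (hf.add (contDiffAt_const.mul hg))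
      (fun i t => fderiv ℝ f (x + t • ee i) (ee i) + c * fderiv ℝ g (x + t • ee i) (ee i)) _ ?_ ?_
    · intro i
      filter_upwards [(second_hasDerivAt hf (ee i)).1, (second_hasDerivAt hg (ee i)).1] with t a b
      exact a.add (b.const_mul c)
    · intro i
      exact (second_hasDerivAt hf (ee i)).2.add ((second_hasDerivAt hg (ee i)).2.const_mul c)
  rw [this, Finset.sum_add_distrib, ← Finset.mul_sum]
  rfl

lemma lap_const (c : ℝ) (x : 𝔼) : lap (fun _ => c) x = 0 := by simp [lap]

lemma lap_comp_add (f : 𝔼 → ℝ) (c x : 𝔼) : lap (fun y => f (c + y)) x = lap f (c + x) := by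
  unfold lap
  refine Finset.sum_congr rfl fun i _ => ?_
  have : (fun y => fderiv ℝ (fun y => f (c + y)) y (EuclideanSpace.single i 1)) =
      (fun y => (fun y => fderiv ℝ f y (EuclideanSpace.single i 1)) (c + y)) := by
    funext y
    rw [fderiv_comp_add_left]
  rw [this, fderiv_comp_add_left (f := fun y => fderiv ℝ f y (EuclideanSpace.single i 1))]

lemma second_nonneg {φ d : ℝ → ℝ} {s : ℝ} (h : IsLocalMin φ 0)
    (h1 : ∀ᶠ t in 𝓝 (0:ℝ), HasDerivAt φ (d t) t) (h2 : HasDerivAt d s 0) : 0 ≤ s := by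
  by_contra! hs
  have hd : d =ᶠ[𝓝 0] deriv φ := by
    filter_upwards [h1] with t a using a.deriv.symm
  have hd0 : deriv φ 0 = 0 := h.deriv_eq_zero
  have hdd : deriv (deriv φ) 0 = s := by rw [← hd.deriv_eq]; exact h2.deriv
  have hmax : IsLocalMax φ 0 :=
    isLocalMax_of_deriv_deriv_neg (by rw [hdd]; exact hs) hd0 h1.self_of_nhds.continuousAt
  have hc : φ =ᶠ[𝓝 0] fun _ => φ 0 := by
    filter_upwards [h, hmax] with t a b using le_antisymm b a
  have : deriv φ =ᶠ[𝓝 0] fun _ => 0 := by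
    have := hc.deriv
    simpa using this
  rw [this.deriv_eq] at hdd
  simp at hdd
  linarith

lemma lap_nonneg_of_isLocalMin {f : 𝔼 → ℝ} {x : 𝔼} (hf : ContDiffAt ℝ 2 f x)
    (h : IsLocalMin f x) : 0 ≤ lap f x := by
  unfold lap
  refine Finset.sum_nonneg fun i _ => ?_
  obtain ⟨h3, h4⟩ := second_hasDerivAt hf (ee i)
  refine second_nonneg ?_ h3 h4
  have hc : ContinuousAt (fun t : ℝ => x + t • ee i) 0 := by fun_prop
  have hmin : IsLocalMin f (x + (0:ℝ) • ee i) := by simpa using h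
  exact IsLocalMin.comp_continuous (g := fun t : ℝ => x + t • ee i) hmin hc

/-- powers of the squared norm -/
noncomputable def P (b : ℝ) (y : EuclideanSpace ℝ (Fin n)) : ℝ := (‖y‖ ^ 2) ^ (-b)

lemma nsq_pos {y : 𝔼} (hy : y ≠ 0) : 0 < ‖y‖ ^ 2 := by positivity

lemma P_contDiffAt (b : ℝ) {y : 𝔼} (hy : y ≠ 0) : ContDiffAt ℝ 2 (P b) y := by
  unfold P
  exact (contDiff_norm_sq ℝ).contDiffAt.rpow_const_of_ne (nsq_pos hy).ne'

lemma P_pos (b : ℝ) {y : 𝔼} (hy : y ≠ 0) : 0 < P b y := Real.rpow_pos_of_pos (nsq_pos hy) _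

lemma nsq_line (x : 𝔼) (i : Fin n) (t : ℝ) :
    HasDerivAt (fun t : ℝ => ‖x + t • ee i‖ ^ 2) (2 * (x i + t)) t := by
  have h := (line_hasDerivAt x (ee i) t).norm_sq
  convert h using 1
  simp [EuclideanSpace.inner_single_right]

lemma line_ev {x : 𝔼} {s : Set 𝔼} (hs : s ∈ 𝓝 x) (e : 𝔼) : ∀ᶠ t in 𝓝 (0:ℝ), x + t • e ∈ s := by
  have hc : Tendsto (fun t : ℝ => x + t • e) (𝓝 0) (𝓝 x) := by
    have : Continuous (fun t : ℝ => x + t • e) := by fun_prop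
    simpa using this.tendsto 0
  exact hc hs

/-- Laplacian of a function of the squared norm. -/
lemma lap_radial {F F' : ℝ → ℝ} {F'' : ℝ} {x : 𝔼}
    (hf : ContDiffAt ℝ 2 (fun y : 𝔼 => F (‖y‖ ^ 2)) x)
    (h1 : ∀ᶠ s in 𝓝 (‖x‖ ^ 2), HasDerivAt F (F' s) s) (h2 : HasDerivAt F' F'' (‖x‖ ^ 2)) :
    lap (fun y : 𝔼 => F (‖y‖ ^ 2)) x = 4 * ‖x‖ ^ 2 * F'' + 2 * n * F' (‖x‖ ^ 2) := by
  rw [lap_eq_sum hf (fun i t => F' (‖x + t • ee i‖ ^ 2) * (2 * (x i + t)))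
    (fun i => F'' * (2 * (x i + 0)) * (2 * (x i + 0)) + F' (‖x‖ ^ 2) * 2)]
  · rw [EuclideanSpace.norm_sq_eq, Finset.sum_add_distrib]
    simp only [Finset.sum_const, Finset.card_univ, Fintype.card_fin, nsmul_eq_mul, add_zero,
      Finset.mul_sum, Finset.sum_mul, Real.norm_eq_abs, sq_abs]
    congr 1
    · exact Finset.sum_congr rfl fun i _ => by ring
    · ring
  · intro i
    have hc : ContinuousAt (fun t : ℝ => ‖x + t • ee i‖ ^ 2) 0 := by fun_prop
    have : ∀ᶠ t in 𝓝 (0:ℝ), HasDerivAt F (F' (‖x + t • ee i‖ ^ 2)) (‖x + t • ee i‖ ^ 2) :=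
      hc.eventually (p := fun s => HasDerivAt F (F' s) s) (by simpa using h1)
    filter_upwards [this] with t ht
    exact ht.comp t (nsq_line x i t)
  · intro i
    have h3 : HasDerivAt F' F'' (‖x + (0:ℝ) • ee i‖ ^ 2) := by simpa using h2
    have h4 := (h3.comp 0 (nsq_line x i 0)).mul
      (((hasDerivAt_id (0:ℝ)).const_add (x i)).const_mul 2)
    refine h4.congr_deriv ?_
    simp

lemma lap_P (b : ℝ) {x : 𝔼} (hx : x ≠ 0) :
    lap (P b) x = 4 * b * (b - ((n:ℝ) - 2) / 2) * (‖x‖ ^ 2) ^ (-b - 1) := by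
  have hp := nsq_pos hx
  have := lap_radial (F := fun s => s ^ (-b)) (F' := fun s => (-b) * s ^ (-b - 1))
    (F'' := (-b) * ((-b - 1) * (‖x‖ ^ 2) ^ (-b - 1 - 1))) (x := x) (P_contDiffAt b hx) ?_ ?_
  · change lap (fun y : 𝔼 => (‖y‖ ^ 2) ^ (-b)) x = _
    rw [this, Real.rpow_sub_one hp.ne' (-b - 1)]
    field_simp
    ring
  · filter_upwards [lt_mem_nhds hp] with s hs
    exact Real.hasDerivAt_rpow_const (Or.inl hs.ne')
  · exact (Real.hasDerivAt_rpow_const (Or.inl hp.ne')).const_mul _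

lemma min_principle (hn : 3 ≤ n) {Ω : Set 𝔼} (hΩ : IsOpen Ω) (h0 : (0 : 𝔼) ∉ Ω) {f : 𝔼 → ℝ}
    (hc : ContinuousOn f (closure Ω)) (hd : ∀ y ∈ Ω, ContDiffAt ℝ 2 f y)
    (hl : ∀ y ∈ Ω, lap f y ≤ 0) (hb : ∀ y ∈ frontier Ω, 0 ≤ f y)
    (hinf : ∀ ε > 0, ∃ R : ℝ, ∀ y ∈ Ω, R ≤ ‖y‖ → -ε < f y) : ∀ y ∈ Ω, 0 ≤ f y := by
  intro y0 hy0
  have hne : ∀ y ∈ Ω, y ≠ 0 := fun y hy h => h0 (h ▸ hy)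
  have hn' : (3:ℝ) ≤ n := by exact_mod_cast hn
  set b : ℝ := ((n:ℝ) - 2) / 4 with hbdef
  have hbpos : 0 < b := by rw [hbdef]; linarith
  have key : ∀ δ > 0, 0 ≤ f y0 + δ * P b y0 := by
    intro δ hδ
    by_contra! hneg
    set g : 𝔼 → ℝ := fun y => f y + δ * P b y with hg
    set ε := - g y0 with hε
    have hεpos : 0 < ε := by simp only [hε, hg]; linarith
    obtain ⟨R, hR⟩ := hinf ε hεpos
    have hfg : ∀ y ∈ Ω, f y ≤ g y := fun y hy => by
      have := mul_pos hδ (P_pos b (hne y hy))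
      simp only [hg]; linarith
    set K : Set 𝔼 := (closure Ω ∩ f ⁻¹' Iic (-ε)) ∩ Metric.closedBall 0 R with hK
    have hKc : IsCompact K :=
      (isCompact_closedBall 0 R).inter_left (hc.preimage_isClosed_of_isClosed isClosed_closure isClosed_Iic)
    have hKΩ : K ⊆ Ω := by
      rintro y ⟨⟨h1, h2⟩, -⟩
      by_contra h3
      have h4 : y ∈ frontier Ω := by rw [hΩ.frontier_eq]; exact ⟨h1, h3⟩
      have := hb y h4
      have h2' : f y ≤ -ε := h2
      linarith
    have hmem : ∀ y ∈ Ω, g y ≤ -ε → y ∈ K := by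
      intro y hy h
      have h2 : f y ≤ -ε := (hfg y hy).trans h
      refine ⟨⟨subset_closure hy, h2⟩, ?_⟩
      rw [mem_closedBall_zero_iff]
      by_contra! h3
      have := hR y hy h3.le
      linarith
    have hy0K : y0 ∈ K := hmem y0 hy0 (by simp [hε])
    have hgd : ∀ y ∈ Ω, ContDiffAt ℝ 2 g y := fun y hy =>
      (hd y hy).add (contDiffAt_const.mul (P_contDiffAt b (hne y hy)))
    have hgc : ContinuousOn g K := fun y hy => (hgd y (hKΩ hy)).continuousAt.continuousWithinAt
    obtain ⟨z, hzK, hz⟩ := hKc.exists_isMinOn ⟨y0, hy0K⟩ hgc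
    have hzΩ := hKΩ hzK
    have hz0 : g z ≤ -ε := by have := hz hy0K; simpa [hε] using this
    have hloc : IsLocalMin g z := by
      filter_upwards [hΩ.mem_nhds hzΩ] with y hy
      by_contra! h
      have := hz (hmem y hy (h.le.trans hz0))
      exact absurd h (not_lt.mpr this)
    have h1 := lap_nonneg_of_isLocalMin (hgd z hzΩ) hloc
    rw [hg, lap_add_smul (hd z hzΩ) (P_contDiffAt b (hne z hzΩ)), lap_P b (hne z hzΩ)] at h1
    have h2 := hl z hzΩ
    have h3 : 0 < (‖z‖ ^ 2) ^ (-b - 1) := Real.rpow_pos_of_pos (nsq_pos (hne z hzΩ)) _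
    have h4 : b - ((n:ℝ) - 2) / 2 = - b := by rw [hbdef]; ring
    rw [h4] at h1
    have h5 : 0 < δ * (4 * b * b * (‖z‖ ^ 2) ^ (-b - 1)) := by positivity
    nlinarith
  by_contra! hneg
  have hP := P_pos b (hne y0 hy0)
  have := key (-(f y0) / (2 * P b y0)) (by apply div_pos <;> linarith)
  have h2 : -(f y0) / (2 * P b y0) * P b y0 = -(f y0) / 2 := by field_simp
  rw [h2] at this
  linarith

lemma lap_P0 {x : 𝔼} (hx : x ≠ 0) : lap (P (((n:ℝ) - 2) / 2)) x = 0 := by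
  rw [lap_P _ hx]; ring

/-- comparison with `A + B |y|^{2-n}` -/
lemma compare (hn : 3 ≤ n) {Ω : Set 𝔼} (hΩ : IsOpen Ω) (h0 : (0 : 𝔼) ∉ closure Ω) {f : 𝔼 → ℝ}
    (hc : ContinuousOn f (closure Ω)) (hd : ∀ y ∈ Ω, ContDiffAt ℝ 2 f y)
    (hl : ∀ y ∈ Ω, lap f y ≤ 0) (A B : ℝ)
    (hb : ∀ y ∈ frontier Ω, A + B * P (((n:ℝ) - 2) / 2) y ≤ f y)
    (hinf : ∀ ε > 0, ∃ R : ℝ, ∀ y ∈ Ω, R ≤ ‖y‖ → A + B * P (((n:ℝ) - 2) / 2) y - ε < f y) :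
    ∀ y ∈ closure Ω, A + B * P (((n:ℝ) - 2) / 2) y ≤ f y := by
  have hne : ∀ y ∈ closure Ω, y ≠ 0 := fun y hy h => h0 (h ▸ hy)
  set a := ((n:ℝ) - 2) / 2
  set g : 𝔼 → ℝ := fun y => (f y + (-B) * P a y) + (-A) * 1 with hg
  have hΩg := min_principle hn hΩ (fun h => h0 (subset_closure h)) (f := g) ?_ ?_ ?_ ?_ ?_
  · intro y hy
    by_cases hyΩ : y ∈ Ω
    · have := hΩg y hyΩ
      simp only [hg] at this; linarith
    · exact hb y (by rw [hΩ.frontier_eq]; exact ⟨hy, hyΩ⟩)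
  · refine (hc.add (continuousOn_const.mul fun y hy => ?_)).add continuousOn_const
    exact (P_contDiffAt a (hne y hy)).continuousAt.continuousWithinAt
  · intro y hy
    exact ((hd y hy).add (contDiffAt_const.mul (P_contDiffAt a (hne y (subset_closure hy))))).add
      contDiffAt_const
  · intro y hy
    have hP := P_contDiffAt a (hne y (subset_closure hy))
    rw [hg, lap_add_smul ((hd y hy).add (contDiffAt_const.mul hP)) contDiffAt_const,
      lap_add_smul (hd y hy) hP, lap_P0 (hne y (subset_closure hy)), lap_const]
    have := hl y hy
    linarith
  · intro y hy
    have := hb y hy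
    simp only [hg]; linarith
  · intro ε hε
    obtain ⟨R, hR⟩ := hinf ε hε
    refine ⟨R, fun y hy h => ?_⟩
    have := hR y hy h
    simp only [hg]; linarith

/-! annuli and exteriors -/

lemma P_anti {b : ℝ} (hb : 0 ≤ b) {x y : 𝔼} (hx : x ≠ 0) (h : ‖x‖ ≤ ‖y‖) : P b y ≤ P b x := by
  unfold P
  exact Real.rpow_le_rpow_of_nonpos (nsq_pos hx) (by gcongr) (by linarith)

lemma P_anti_lt {b : ℝ} (hb : 0 < b) {x y : 𝔼} (hx : x ≠ 0) (h : ‖x‖ < ‖y‖) : P b y < P b x := by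
  unfold P
  exact Real.rpow_lt_rpow_of_neg (nsq_pos hx) (by gcongr) (by linarith)

lemma annulus_facts {r R : ℝ} :
    IsOpen {y : 𝔼 | r < ‖y‖ ∧ ‖y‖ < R} ∧
    (closure {y : 𝔼 | r < ‖y‖ ∧ ‖y‖ < R} ⊆ {y : 𝔼 | r ≤ ‖y‖ ∧ ‖y‖ ≤ R}) ∧
    ∀ y ∈ frontier {y : 𝔼 | r < ‖y‖ ∧ ‖y‖ < R}, ‖y‖ = r ∨ ‖y‖ = R := by
  have h1 : IsOpen {y : 𝔼 | r < ‖y‖ ∧ ‖y‖ < R} :=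
    (isOpen_lt continuous_const continuous_norm).inter (isOpen_lt continuous_norm continuous_const)
  have h2 : closure {y : 𝔼 | r < ‖y‖ ∧ ‖y‖ < R} ⊆ {y : 𝔼 | r ≤ ‖y‖ ∧ ‖y‖ ≤ R} := by
    apply closure_minimal
    · rintro y ⟨h1, h2⟩; exact ⟨h1.le, h2.le⟩
    · exact (isClosed_le continuous_const continuous_norm).inter
        (isClosed_le continuous_norm continuous_const)
  refine ⟨h1, h2, ?_⟩
  intro y hy
  rw [h1.frontier_eq] at hy
  obtain ⟨h3, h4⟩ := hy
  obtain ⟨h5, h6⟩ := h2 h3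
  by_contra! h
  exact h4 ⟨lt_of_le_of_ne h5 (Ne.symm h.1), lt_of_le_of_ne h6 h.2⟩

lemma exterior_facts {r : ℝ} :
    IsOpen {y : 𝔼 | r < ‖y‖} ∧ (closure {y : 𝔼 | r < ‖y‖} ⊆ {y : 𝔼 | r ≤ ‖y‖}) ∧
    ∀ y ∈ frontier {y : 𝔼 | r < ‖y‖}, ‖y‖ = r := by
  have h1 : IsOpen {y : 𝔼 | r < ‖y‖} := isOpen_lt continuous_const continuous_norm
  have h2 : closure {y : 𝔼 | r < ‖y‖} ⊆ {y : 𝔼 | r ≤ ‖y‖} := by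
    apply closure_minimal
    · intro y h1; exact (show r < ‖y‖ from h1).le
    · exact isClosed_le continuous_const continuous_norm
  refine ⟨h1, h2, ?_⟩
  intro y hy
  rw [h1.frontier_eq] at hy
  obtain ⟨h3, h4⟩ := hy
  have h5 := h2 h3
  simp only [mem_ofPred_eq, not_lt] at h4 h5
  exact le_antisymm h4 h5

/-- comparison in an annulus -/
lemma annulus_compare (hn : 3 ≤ n) {r R : ℝ} (hr : 0 < r) {f : 𝔼 → ℝ}
    (hc : ∀ y : 𝔼, r ≤ ‖y‖ → ‖y‖ ≤ R → ContinuousAt f y)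
    (hd : ∀ y : 𝔼, r < ‖y‖ → ‖y‖ < R → ContDiffAt ℝ 2 f y)
    (hl : ∀ y : 𝔼, r < ‖y‖ → ‖y‖ < R → lap f y ≤ 0) (A B : ℝ)
    (hb : ∀ y : 𝔼, ‖y‖ = r ∨ ‖y‖ = R → A + B * P (((n:ℝ) - 2) / 2) y ≤ f y) :
    ∀ y : 𝔼, r < ‖y‖ → ‖y‖ < R → A + B * P (((n:ℝ) - 2) / 2) y ≤ f y := by
  obtain ⟨h1, h2, h3⟩ := annulus_facts (n := n) (r := r) (R := R)
  intro y hy1 hy2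
  refine compare hn h1 ?_ ?_ (fun y hy => hd y hy.1 hy.2) (fun y hy => hl y hy.1 hy.2) A B
    (fun y hy => hb y (h3 y hy)) ?_ y (subset_closure ⟨hy1, hy2⟩)
  · intro h
    have := (h2 h).1
    simp at this; linarith
  · intro y hy
    exact (hc y (h2 hy).1 (h2 hy).2).continuousWithinAt
  · intro ε _
    exact ⟨R, fun y hy h => absurd hy.2 (not_lt.mpr h)⟩

/-- lower bound at infinity for nonnegative superharmonic functions in an exterior domain -/
lemma far_bound (hn : 3 ≤ n) {R m : ℝ} (hR : 0 < R) {f : 𝔼 → ℝ}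
    (hc : ∀ y : 𝔼, R ≤ ‖y‖ → ContDiffAt ℝ 2 f y)
    (hl : ∀ y : 𝔼, R < ‖y‖ → lap f y ≤ 0) (hf : ∀ y : 𝔼, R ≤ ‖y‖ → 0 ≤ f y)
    (hb : ∀ y : 𝔼, ‖y‖ = R → m ≤ f y) (hm : 0 ≤ m) :
    ∀ y : 𝔼, R ≤ ‖y‖ → m * (R ^ 2 / ‖y‖ ^ 2) ^ (((n:ℝ) - 2) / 2) ≤ f y := by
  obtain ⟨h1, h2, h3⟩ := exterior_facts (n := n) (r := R)
  have hn' : (3:ℝ) ≤ n := by exact_mod_cast hn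
  set a := ((n:ℝ) - 2) / 2 with ha
  have hapos : 0 < a := by rw [ha]; linarith
  have hrw : ∀ y : 𝔼, R ≤ ‖y‖ → m * (R ^ 2 / ‖y‖ ^ 2) ^ a = 0 + (m * (R ^ 2) ^ a) * P a y := by
    intro y hy
    unfold P
    rw [Real.div_rpow (by positivity) (by positivity), Real.rpow_neg (by positivity)]
    ring
  intro y hy
  rcases hy.eq_or_lt with hy' | hy'
  · rw [← hy', div_self (by positivity), Real.one_rpow, mul_one]
    exact hb y hy'.symm
  rw [hrw y hy]
  refine compare hn h1 ?_ ?_ (fun y hy => hc y (le_of_lt hy)) (fun y hy => hl y hy) 0 _ ?_ ?_ y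
    (subset_closure hy')
  · intro h
    have := h2 h
    simp at this; linarith
  · intro y hy
    exact (hc y (h2 hy)).continuousAt.continuousWithinAt
  · intro y hy
    have hyR := h3 y hy
    rw [← hrw y hyR.ge, hyR, div_self (by positivity), Real.one_rpow, mul_one]
    exact hb y hyR
  · intro ε hε
    have ht : Tendsto (fun s : ℝ => m * (R ^ 2 / s ^ 2) ^ a) atTop (𝓝 0) := by
      have h4 : Tendsto (fun s : ℝ => R ^ 2 / s ^ 2) atTop (𝓝 0) :=
        tendsto_const_nhds.div_atTop (tendsto_pow_atTop (by norm_num))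
      have h5 := (h4.rpow_const (p := a) (Or.inr hapos.le)).const_mul m
      simpa [Real.zero_rpow hapos.ne'] using h5
    obtain ⟨S, hS⟩ := eventually_atTop.mp (ht.eventually (gt_mem_nhds hε))
    refine ⟨S, fun y hy h => ?_⟩
    have h6 := hS _ h
    have hyR : R ≤ ‖y‖ := le_of_lt hy
    rw [← hrw y hyR]
    have := hf y hyR
    linarith

/-- strong minimum principle on balls -/
lemma ball_pos (hn : 3 ≤ n) {f : 𝔼 → ℝ} {c : 𝔼} {R : ℝ}
    (hc : ∀ y ∈ Metric.closedBall c R, ContDiffAt ℝ 2 f y)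
    (hl : ∀ y ∈ Metric.closedBall c R, lap f y ≤ 0)
    (hf : ∀ y ∈ Metric.closedBall c R, 0 ≤ f y) (hfc : 0 < f c) :
    ∀ y ∈ Metric.ball c R, 0 < f y := by
  intro y hy
  have hn' : (3:ℝ) ≤ n := by exact_mod_cast hn
  have hRpos : 0 < R := Metric.pos_of_mem_ball hy
  set g : 𝔼 → ℝ := fun z => f (c + z) with hg
  have hmem : ∀ z : 𝔼, ‖z‖ ≤ R → c + z ∈ Metric.closedBall c R := by
    intro z hz; simpa [Metric.mem_closedBall, dist_eq_norm] using hz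
  have hgd : ∀ z : 𝔼, ‖z‖ ≤ R → ContDiffAt ℝ 2 g z := by
    intro z hz
    exact ContDiffAt.comp (g := f) (f := fun z => c + z) z (hc _ (hmem z hz))
      (contDiffAt_const.add contDiffAt_id)
  -- positive near the center
  have h0 : ContinuousAt g 0 := (hgd 0 (by simpa using hRpos.le)).continuousAt
  have h1 : ∀ᶠ z in 𝓝 (0:𝔼), f c / 2 < g z := by
    apply h0.eventually (lt_mem_nhds _)
    simp only [hg, add_zero]; linarith
  obtain ⟨r, hr, hrb⟩ := Metric.eventually_nhds_iff.mp h1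
  set ρ := min (r / 2) (R / 2) with hρ
  have hρpos : 0 < ρ := by positivity
  have hρR : ρ < R := (min_le_right _ _).trans_lt (by linarith)
  have hin : ∀ z : 𝔼, ‖z‖ ≤ ρ → f c / 2 < g z := by
    intro z hz
    apply hrb
    rw [dist_zero_right]
    exact (hz.trans (min_le_left _ _)).trans_lt (by linarith)
  set z := y - c with hz
  have hzR : ‖z‖ < R := by simpa [dist_eq_norm, hz] using hy
  have hgz : g z = f y := by simp [hg, hz]
  rw [← hgz]
  by_cases hzρ : ‖z‖ ≤ ρ
  · have := hin z hzρ; linarith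
  push Not at hzρ
  set a := ((n:ℝ) - 2) / 2 with ha
  have hapos : 0 < a := by rw [ha]; linarith
  set pρ := (ρ ^ 2) ^ (-a) with hpρ
  set pR := (R ^ 2) ^ (-a) with hpR
  have hlt : pR < pρ := by
    apply Real.rpow_lt_rpow_of_neg (by positivity) (by gcongr) (by linarith)
  have hP : ∀ x : 𝔼, P a x = (‖x‖ ^ 2) ^ (-a) := fun x => rfl
  set B := f c / 2 / (pρ - pR) with hB
  have hBpos : 0 < B := by
    apply div_pos (by linarith); linarith
  have := annulus_compare hn hρpos (f := g) (R := R) (fun x _ h => (hgd x h).continuousAt)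
    (fun x _ h => hgd x h.le) ?_ (-(B * pR)) B ?_ z hzρ hzR
  · have h3 : pR < P a z := by
      rw [hP]
      apply Real.rpow_lt_rpow_of_neg _ (by gcongr) (by linarith)
      have : 0 < ‖z‖ := by linarith
      positivity
    have h4 : 0 < B * (P a z - pR) := mul_pos hBpos (by linarith)
    nlinarith
  · intro x _ h
    rw [hg, lap_comp_add]
    exact hl _ (hmem x h.le)
  · intro x hx
    rcases hx with hx | hx
    · have h3 := hin x hx.le
      rw [hP, hx, ← hpρ]
      have h4 : B * (pρ - pR) = f c / 2 := by
        rw [hB]; field_simp [(sub_pos.mpr hlt).ne']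
      nlinarith
    · rw [hP, hx, ← hpR]
      have := hf _ (hmem x hx.le)
      simp only [hg]; linarith

lemma exterior_connected (hn : 3 ≤ n) (r : ℝ) (hr : 0 < r) : IsPreconnected {y : 𝔼 | r < ‖y‖} := by
  have hrank : 1 < Module.rank ℝ 𝔼 := by
    rw [← Module.finrank_eq_rank, finrank_euclideanSpace_fin]
    exact_mod_cast (by omega : 1 < n)
  have h1 : IsPreconnected (Metric.sphere (0:𝔼) 1) := isPreconnected_sphere hrank 0 1
  have h2 : IsPreconnected (Ioi r ×ˢ Metric.sphere (0:𝔼) 1) := isPreconnected_Ioi.prod h1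
  have h3 := h2.image (fun p : ℝ × 𝔼 => p.1 • p.2) (by fun_prop)
  convert h3 using 1
  ext y
  simp only [mem_ofPred_eq, mem_image, mem_prod, mem_Ioi, mem_sphere_iff_norm, sub_zero, Prod.exists]
  constructor
  · intro h
    have hy : ‖y‖ ≠ 0 := by linarith
    refine ⟨‖y‖, ‖y‖⁻¹ • y, ⟨h, ?_⟩, ?_⟩
    · rw [norm_smul, norm_inv, norm_norm, inv_mul_cancel₀ hy]
    · rw [smul_smul, mul_inv_cancel₀ hy, one_smul]
  · rintro ⟨s, z, ⟨h1, h2⟩, rfl⟩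
    rw [norm_smul, h2, mul_one, Real.norm_eq_abs]
    exact h1.trans_le (le_abs_self s)

/-- strong minimum principle in the exterior of a ball -/
lemma exterior_pos (hn : 3 ≤ n) {f : 𝔼 → ℝ} {r : ℝ} (hr : 0 < r)
    (hc : ∀ y : 𝔼, r < ‖y‖ → ContDiffAt ℝ 2 f y)
    (hl : ∀ y : 𝔼, r < ‖y‖ → lap f y ≤ 0) (hf : ∀ y : 𝔼, r < ‖y‖ → 0 ≤ f y)
    {y0 : 𝔼} (hy0 : r < ‖y0‖) (hpos : 0 < f y0) : ∀ y : 𝔼, r < ‖y‖ → 0 < f y := by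
  set Ω := {y : 𝔼 | r < ‖y‖} with hΩ
  have hΩo : IsOpen Ω := isOpen_lt continuous_const continuous_norm
  have hconn := exterior_connected hn r hr
  have hsub : Ω ⊆ {y | y ∈ Ω ∧ 0 < f y} := by
    apply hconn.subset_of_closure_inter_subset
    · rw [isOpen_iff_mem_nhds]
      rintro y ⟨hy, hy'⟩
      filter_upwards [hΩo.mem_nhds hy, (hc y hy).continuousAt.eventually (lt_mem_nhds hy')] with z a b
      exact ⟨a, b⟩
    · exact ⟨y0, hy0, hy0, hpos⟩
    · rintro z ⟨hz, hzΩ⟩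
      refine ⟨hzΩ, ?_⟩
      obtain ⟨d, hd, hdb⟩ := Metric.isOpen_iff.mp hΩo z hzΩ
      obtain ⟨w, ⟨hw, hw'⟩, hwz⟩ := Metric.mem_closure_iff.mp hz (d / 3) (by linarith)
      have hcb : Metric.closedBall w (d / 2) ⊆ Ω := by
        intro x hx
        apply hdb
        rw [Metric.mem_ball]
        rw [Metric.mem_closedBall] at hx
        calc dist x z ≤ dist x w + dist w z := dist_triangle _ _ _
          _ < d := by rw [dist_comm w z]; linarith
      refine ball_pos hn (fun x hx => hc x (hcb hx)) (fun x hx => hl x (hcb hx))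
        (fun x hx => hf x (hcb hx)) hw' z ?_
      rw [Metric.mem_ball]; linarith
  exact fun y hy => (hsub hy).2

/-- Kelvin transform -/
noncomputable def Kel (u : EuclideanSpace ℝ (Fin n) → ℝ) (l : ℝ)
    (y : EuclideanSpace ℝ (Fin n)) : ℝ :=
  (l ^ 2 / ‖y‖ ^ 2) ^ (((n:ℝ) - 2) / 2) * u ((l ^ 2 / ‖y‖ ^ 2) • y)

lemma Kel_contDiffAt {u : 𝔼 → ℝ} (hu : ContDiff ℝ 2 u) {l : ℝ} (hl : 0 < l) {y : 𝔼}
    (hy : y ≠ 0) : ContDiffAt ℝ 2 (Kel u l) y := by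
  have hN := nsq_pos hy
  have h1 : ContDiffAt ℝ 2 (fun y : 𝔼 => l ^ 2 / ‖y‖ ^ 2) y :=
    contDiffAt_const.div (contDiff_norm_sq ℝ).contDiffAt hN.ne'
  have h2 : l ^ 2 / ‖y‖ ^ 2 ≠ 0 := by positivity
  exact (h1.rpow_const_of_ne h2).mul (hu.contDiffAt.comp y (h1.smul contDiffAt_id))

lemma lap_eq_H {u : 𝔼 → ℝ} (hu : ContDiff ℝ 2 u) (z : 𝔼) :
    lap u z = ∑ i, fderiv ℝ (fderiv ℝ u) z (ee i) (ee i) := by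
  unfold lap
  refine Finset.sum_congr rfl fun i _ => ?_
  have : DifferentiableAt ℝ (fderiv ℝ u) z :=
    (hu.contDiffAt.fderiv_right (m := 1) (by norm_num)).differentiableAt (by simp)
  rw [fderiv_clm_apply this (differentiableAt_const _)]
  simp

lemma sum_coord (y : 𝔼) : ∑ i, y i • ee i = y := by
  ext j
  simp [Finset.sum_apply, Pi.single_apply]

lemma lap_Kel {u : 𝔼 → ℝ} (hu : ContDiff ℝ 2 u) {l : ℝ} (hl : 0 < l) {y : 𝔼} (hy : y ≠ 0) :
    lap (Kel u l) y = (l ^ 2 / ‖y‖ ^ 2) ^ (((n:ℝ) - 2) / 2 + 2) *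
      lap u ((l ^ 2 / ‖y‖ ^ 2) • y) := by
  have hN := nsq_pos hy
  set a : ℝ := ((n:ℝ) - 2) / 2 with ha
  set N : ℝ := ‖y‖ ^ 2 with hNdef
  set q : ℝ := l ^ 2 / N with hq
  have hqpos : 0 < q := by positivity
  set z : 𝔼 := q • y with hz
  set L := fderiv ℝ u z with hL
  set H := fderiv ℝ (fderiv ℝ u) z with hH
  set Q : Fin n → ℝ → ℝ := fun i t => l ^ 2 / ‖y + t • ee i‖ ^ 2 with hQ
  set Q' : Fin n → ℝ → ℝ := fun i t =>
    -(l ^ 2 * (2 * (y i + t))) / (‖y + t • ee i‖ ^ 2) ^ 2 with hQ'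
  set Φ' : Fin n → ℝ → 𝔼 := fun i t => Q i t • ee i + Q' i t • (y + t • ee i) with hΦ'
  have hud : Differentiable ℝ u := hu.differentiable (by simp)
  have hud2 : Differentiable ℝ (fderiv ℝ u) :=
    (hu.fderiv_right (m := 1) (by norm_num)).differentiable (by simp)
  have hQ0 : ∀ i, Q i 0 = q := fun i => by simp [hQ, hq, hNdef]
  have hQ'0 : ∀ i, Q' i 0 = -2 * q * y i / N := fun i => by
    simp only [hQ', hq, zero_smul, add_zero, ← hNdef]; field_simp
  have hQd : ∀ i t, y + t • ee i ≠ 0 → HasDerivAt (Q i) (Q' i t) t := by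
    intro i t ht
    have := (hasDerivAt_const t (l ^ 2)).div (nsq_line y i t) (nsq_pos ht).ne'
    refine this.congr_deriv ?_
    simp only [hQ']; ring
  have hQ'd : ∀ i, HasDerivAt (Q' i) (-2 * q / N + 8 * q * (y i) ^ 2 / N ^ 2) 0 := by
    intro i
    have h1 : HasDerivAt (fun t : ℝ => -(l ^ 2 * (2 * (y i + t)))) (-(l ^ 2 * (2 * 1))) 0 :=
      ((((hasDerivAt_id (0:ℝ)).const_add (y i)).const_mul 2).const_mul (l ^ 2)).neg
    have h2 := (nsq_line y i 0).pow 2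
    have h3 : (‖y + (0:ℝ) • ee i‖ ^ 2) ^ 2 ≠ 0 := by
      simp only [zero_smul, add_zero]; positivity
    refine (h1.div h2 h3).congr_deriv ?_
    simp only [zero_smul, add_zero, hq, Pi.pow_apply, ← hNdef]
    field_simp
    ring
  have hΦd : ∀ i t, y + t • ee i ≠ 0 →
      HasDerivAt (fun t => Q i t • (y + t • ee i)) (Φ' i t) t := by
    intro i t ht
    exact (hQd i t ht).smul (line_hasDerivAt y (ee i) t)
  have hne : ∀ i, ∀ᶠ t in 𝓝 (0:ℝ), y + t • ee i ≠ 0 := fun i =>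
    line_ev (isOpen_ne.mem_nhds hy) (ee i)
  have hQne : ∀ i t, y + t • ee i ≠ 0 → Q i t ≠ 0 := fun i t ht => by
    have := nsq_pos ht
    simp only [hQ]; positivity
  have hy0 : ∀ i, y + (0:ℝ) • ee i ≠ 0 := fun i => by simpa using hy
  have hΦ'0 : ∀ i, Φ' i 0 = q • ee i + (-2 * q * y i / N) • y := fun i => by
    simp only [hΦ', hQ0, hQ'0, zero_smul, add_zero]
  have hΦ'd : ∀ i, HasDerivAt (Φ' i) ((-2 * q / N + 8 * q * (y i) ^ 2 / N ^ 2) • y +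
      (2 * (-2 * q * y i / N)) • ee i) 0 := by
    intro i
    have h1 := ((hQd i 0 (hy0 i)).smul_const (ee i)).add
      ((hQ'd i).smul (line_hasDerivAt y (ee i) 0))
    refine h1.congr_deriv ?_
    rw [hQ'0]
    simp only [zero_smul, add_zero]
    module
  have hz0 : ∀ i, Q i 0 • (y + (0:ℝ) • ee i) = z := fun i => by simp [hQ0, hz]
  rw [lap_eq_sum (Kel_contDiffAt hu hl hy)
    (fun i t => Q' i t * a * Q i t ^ (a - 1) * u (Q i t • (y + t • ee i)) +
      Q i t ^ a * fderiv ℝ u (Q i t • (y + t • ee i)) (Φ' i t))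
    (fun i => (((-2 * q / N + 8 * q * (y i) ^ 2 / N ^ 2) * a) * q ^ (a - 1)
        + (-2 * q * y i / N) * a * ((-2 * q * y i / N) * (a - 1) * q ^ (a - 1 - 1))) * u z
      + ((-2 * q * y i / N) * a * q ^ (a - 1)) * (L (q • ee i + (-2 * q * y i / N) • y))
      + (((-2 * q * y i / N) * a * q ^ (a - 1)) * (L (q • ee i + (-2 * q * y i / N) • y))
      + q ^ a * (H (q • ee i + (-2 * q * y i / N) • y) (q • ee i + (-2 * q * y i / N) • y)
        + L ((-2 * q / N + 8 * q * (y i) ^ 2 / N ^ 2) • y + (2 * (-2 * q * y i / N)) • ee i))))]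
  · rw [lap_eq_H hu]
    have hn2 : (n:ℝ) = 2 * a + 2 := by rw [ha]; ring
    have e1 : q ^ (a - 1) = q ^ a / q := Real.rpow_sub_one hqpos.ne' a
    have e2 : q ^ (a - 1 - 1) = q ^ a / q / q := by rw [Real.rpow_sub_one hqpos.ne', e1]
    have e3 : q ^ (a + 2) = q ^ a * q ^ 2 := by
      rw [Real.rpow_add hqpos]; norm_cast
    rw [e1, e2, e3]
    have s1 : ∑ i, (y i) ^ 2 = N := by
      rw [hNdef, EuclideanSpace.norm_sq_eq]; simp
    have s2 : ∑ i, y i * L (ee i) = L y := by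
      conv_rhs => rw [← sum_coord y]
      simp [map_sum]
    have s3 : ∑ i, y i * H (ee i) y = H y y := by
      have : H y = H (∑ i, y i • ee i) := by rw [sum_coord]
      rw [this]; simp [map_sum]
    have s4 : ∑ i, y i * H y (ee i) = H y y := by
      have : H y y = H y (∑ i, y i • ee i) := by rw [sum_coord]
      rw [this]; simp [map_sum]
    have hterm : ∀ i, (((-2 * q / N + 8 * q * (y i) ^ 2 / N ^ 2) * a) * (q ^ a / q)
        + (-2 * q * y i / N) * a * ((-2 * q * y i / N) * (a - 1) * (q ^ a / q / q))) * u z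
      + ((-2 * q * y i / N) * a * (q ^ a / q)) * (L (q • ee i + (-2 * q * y i / N) • y))
      + (((-2 * q * y i / N) * a * (q ^ a / q)) * (L (q • ee i + (-2 * q * y i / N) • y))
      + q ^ a * (H (q • ee i + (-2 * q * y i / N) • y) (q • ee i + (-2 * q * y i / N) • y)
        + L ((-2 * q / N + 8 * q * (y i) ^ 2 / N ^ 2) • y + (2 * (-2 * q * y i / N)) • ee i)))
      = (-2 * a * q ^ a / N * u z - 2 * q ^ a * q / N * L y)
        + ((8 * a + 4 * a * (a - 1)) * q ^ a / N ^ 2 * u z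
            + (8 * a + 8) * q ^ a * q / N ^ 2 * L y + 4 * q ^ a * q ^ 2 / N ^ 2 * H y y) * (y i) ^ 2
        + (-4 * a - 4) * q ^ a * q / N * (y i * L (ee i))
        + q ^ a * q ^ 2 * H (ee i) (ee i)
        + (-2 * q ^ a * q ^ 2 / N) * (y i * H (ee i) y)
        + (-2 * q ^ a * q ^ 2 / N) * (y i * H y (ee i)) := by
      intro i
      simp only [map_add, map_smul, add_apply, smul_apply,
        smul_eq_mul]
      field_simp
      ring
    rw [Finset.sum_congr rfl fun i _ => hterm i]
    simp only [Finset.sum_add_distrib, ← Finset.mul_sum, s1, s2, s3, s4, Finset.sum_const,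
      Finset.card_univ, Fintype.card_fin, nsmul_eq_mul]
    rw [hn2]
    field_simp
    ring
  · intro i
    filter_upwards [hne i] with t ht
    have h1 := (hQd i t ht).rpow_const (p := a) (Or.inl (hQne i t ht))
    have h2 := (hud (Q i t • (y + t • ee i))).hasFDerivAt.comp_hasDerivAt t (hΦd i t ht)
    exact h1.mul h2
  · intro i
    have h1 := (hQd i 0 (hy0 i)).rpow_const (p := a) (Or.inl (hQne i 0 (hy0 i)))
    have h1' := (hQd i 0 (hy0 i)).rpow_const (p := a - 1) (Or.inl (hQne i 0 (hy0 i)))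
    have h2 := (hud (Q i 0 • (y + (0:ℝ) • ee i))).hasFDerivAt.comp_hasDerivAt 0 (hΦd i 0 (hy0 i))
    have h3 := (hud2 (Q i 0 • (y + (0:ℝ) • ee i))).hasFDerivAt.comp_hasDerivAt 0 (hΦd i 0 (hy0 i))
    have h4 := h3.clm_apply (hΦ'd i)
    have h5 := ((((hQ'd i).mul_const a).mul h1').mul h2).add (h1.mul h4)
    refine h5.congr_deriv ?_
    simp only [Function.comp_apply, hΦ'0, hQ0, hQ'0, Pi.mul_apply, zero_smul, add_zero, ← hz,
      ← hL, ← hH]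

/-- the radial derivative quantity -/
noncomputable def gg (u : EuclideanSpace ℝ (Fin n) → ℝ) (y : EuclideanSpace ℝ (Fin n)) : ℝ :=
  ((n:ℝ) - 2) / 2 * u y + fderiv ℝ u y y

/-- the Kelvin transform lies below `u` outside the ball of radius `l` -/
def Good (u : EuclideanSpace ℝ (Fin n) → ℝ) (l : ℝ) : Prop :=
  ∀ y : EuclideanSpace ℝ (Fin n), l ≤ ‖y‖ → Kel u l y ≤ u y

/-- positive solutions -/
structure Sol (u : EuclideanSpace ℝ (Fin n) → ℝ) : Prop where
  smooth : ContDiff ℝ 2 u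
  pos : ∀ x, 0 < u x
  eq : ∀ x, lap u x = -((n : ℝ) * ((n : ℝ) - 2) * u x ^ (((n : ℝ) + 2) / ((n : ℝ) - 2)))

lemma gg_continuous {u : 𝔼 → ℝ} (hu : ContDiff ℝ 2 u) : Continuous (gg u) := by
  unfold gg
  have h1 : Continuous (fderiv ℝ u) := hu.continuous_fderiv (by simp)
  have h2 := hu.continuous
  fun_prop

lemma near_le {u : 𝔼 → ℝ} (hu : ContDiff ℝ 2 u) {α β : ℝ}
    (hg : ∀ z : 𝔼, α < ‖z‖ → ‖z‖ ≤ β → 0 < gg u z) {l : ℝ} (hl : 0 < l) {y : 𝔼} (hly : l ≤ ‖y‖)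
    (hyβ : ‖y‖ ≤ β) (hα : α < l ^ 2 / ‖y‖) : Kel u l y ≤ u y := by
  have hy : 0 < ‖y‖ := hl.trans_le hly
  set a := ((n:ℝ) - 2) / 2 with ha
  set q := l ^ 2 / ‖y‖ ^ 2 with hq
  have hq0 : 0 < q := by positivity
  have hq1 : q ≤ 1 := by
    rw [hq, div_le_one (by positivity)]
    gcongr
  have hud : Differentiable ℝ u := hu.differentiable (by simp)
  have hder : ∀ t : ℝ, 0 < t → HasDerivAt (fun t : ℝ => t ^ a * u (t • y))
      (t ^ (a - 1) * gg u (t • y)) t := by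
    intro t ht
    have h1 := Real.hasDerivAt_rpow_const (x := t) (p := a) (Or.inl ht.ne')
    have h2 : HasDerivAt (fun t : ℝ => t • y) y t := by
      simpa using (hasDerivAt_id t).smul_const y
    have h3 := (hud (t • y)).hasFDerivAt.comp_hasDerivAt t h2
    refine (h1.mul h3).congr_deriv ?_
    simp only [gg, Function.comp_apply, map_smul, smul_eq_mul, Real.rpow_sub_one ht.ne', ← ha]
    field_simp
  have hmono : MonotoneOn (fun t : ℝ => t ^ a * u (t • y)) (Icc q 1) := by
    apply monotoneOn_of_deriv_nonneg (convex_Icc q 1)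
    · intro t ht
      exact (hder t (hq0.trans_le ht.1)).continuousAt.continuousWithinAt
    · intro t ht
      rw [interior_Icc] at ht
      exact (hder t (hq0.trans ht.1)).differentiableAt.differentiableWithinAt
    · intro t ht
      rw [interior_Icc] at ht
      have ht0 : 0 < t := hq0.trans ht.1
      rw [(hder t ht0).deriv]
      have hnorm : ‖t • y‖ = t * ‖y‖ := by rw [norm_smul, Real.norm_of_nonneg ht0.le]
      refine (mul_pos (Real.rpow_pos_of_pos ht0 _) (hg _ ?_ ?_)).le
      · rw [hnorm]
        calc α < l ^ 2 / ‖y‖ := hα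
          _ = q * ‖y‖ := by rw [hq]; field_simp
          _ ≤ t * ‖y‖ := by gcongr; exact ht.1.le
      · rw [hnorm]
        calc t * ‖y‖ ≤ 1 * ‖y‖ := by gcongr; exact ht.2.le
          _ ≤ β := by simpa using hyβ
  have := hmono ⟨le_refl q, hq1⟩ ⟨hq1, le_refl 1⟩ hq1
  simpa [Kel, ← hq, ← ha] using this

lemma ray_deriv {u : 𝔼 → ℝ} (hu : ContDiff ℝ 2 u) {z : 𝔼} (hz : z ≠ 0) :
    HasDerivAt (fun t : ℝ => u (t • z) - Kel u ‖z‖ (t • z)) (2 * gg u z) 1 := by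
  have hud : Differentiable ℝ u := hu.differentiable (by simp)
  set a := ((n:ℝ) - 2) / 2 with ha
  have hzn : 0 < ‖z‖ := norm_pos_iff.mpr hz
  have heq : (fun t : ℝ => u (t • z) - Kel u ‖z‖ (t • z)) =ᶠ[𝓝 1]
      (fun t : ℝ => u (t • z) - t ^ (-(2 * a)) * u (t⁻¹ • z)) := by
    filter_upwards [lt_mem_nhds (zero_lt_one' ℝ)] with t ht
    have h1 : ‖z‖ ^ 2 / ‖t • z‖ ^ 2 = t ^ (-2 : ℝ) := by
      rw [norm_smul, Real.norm_of_nonneg ht.le, Real.rpow_neg ht.le]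
      norm_cast
      field_simp
    unfold Kel
    rw [h1, ← Real.rpow_mul ht.le, smul_smul, ← Real.rpow_add_one ht.ne', ← ha]
    congr 3
    · ring_nf
    · congr 2
      rw [show (-2 + 1 : ℝ) = -1 by norm_num, Real.rpow_neg_one]
  refine HasDerivAt.congr_of_eventuallyEq ?_ heq
  have h1 : HasDerivAt (fun t : ℝ => t • z) z 1 := by
    simpa using (hasDerivAt_id (1:ℝ)).smul_const z
  have h2 : HasDerivAt (fun t : ℝ => t⁻¹ • z) (-z) 1 := by
    simpa using (hasDerivAt_inv (one_ne_zero (α := ℝ))).smul_const z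
  have h3 := (hud ((1:ℝ) • z)).hasFDerivAt.comp_hasDerivAt (1:ℝ) h1
  have h4 := (hud ((1:ℝ)⁻¹ • z)).hasFDerivAt.comp_hasDerivAt (1:ℝ) h2
  have h5 := Real.hasDerivAt_rpow_const (x := 1) (p := -(2 * a)) (Or.inl one_ne_zero)
  refine (h3.sub (h5.mul h4)).congr_deriv ?_
  simp [gg, ← ha]
  ring

lemma Kel_sphere (u : 𝔼 → ℝ) {y : 𝔼} (hy : y ≠ 0) : Kel u ‖y‖ y = u y := by
  have := nsq_pos hy
  simp [Kel, div_self this.ne']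

lemma slope_nonneg {d : ℝ → ℝ} {D : ℝ} (hd : HasDerivAt d D 1) (h1 : d 1 = 0)
    (h : ∀ t : ℝ, 1 < t → t < 2 → 0 ≤ d t) : 0 ≤ D := by
  have h2 := (hasDerivWithinAt_iff_tendsto_slope' (s := Ioi (1:ℝ)) (by simp)).mp
    hd.hasDerivWithinAt
  refine ge_of_tendsto h2 ?_
  have : Iio (2:ℝ) ∈ 𝓝[>] (1:ℝ) := mem_nhdsWithin_of_mem_nhds (Iio_mem_nhds (by norm_num))
  filter_upwards [self_mem_nhdsWithin, this] with t ht ht2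
  rw [slope_def_field, h1, sub_zero]
  exact div_nonneg (h t ht ht2) (by have : (1:ℝ) < t := ht; linarith)

lemma gg_nonneg_of_good {u : 𝔼 → ℝ} (hu : ContDiff ℝ 2 u) {z : 𝔼} (hz : z ≠ 0)
    (hG : Good u ‖z‖) : 0 ≤ gg u z := by
  have := slope_nonneg (ray_deriv hu hz) (by simp [Kel_sphere u hz]) ?_
  · linarith
  · intro t ht _
    have := hG (t • z) (by
      rw [norm_smul, Real.norm_of_nonneg (by linarith)]
      nlinarith [norm_nonneg z])
    linarith

lemma Kel_pos {u : 𝔼 → ℝ} (hpos : ∀ x, 0 < u x) {l : ℝ} (hl : 0 < l) {y : 𝔼} (hy : y ≠ 0) :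
    0 < Kel u l y := by
  have := nsq_pos hy
  have hq : 0 < l ^ 2 / ‖y‖ ^ 2 := by positivity
  exact mul_pos (Real.rpow_pos_of_pos hq _) (hpos _)

lemma lap_Kel_sol (hn : 3 ≤ n) {u : 𝔼 → ℝ} (hu : Sol u) {l : ℝ} (hl : 0 < l) {y : 𝔼} (hy : y ≠ 0) :
    lap (Kel u l) y =
      -((n : ℝ) * ((n : ℝ) - 2) * Kel u l y ^ (((n : ℝ) + 2) / ((n : ℝ) - 2))) := by
  have hn' : (3:ℝ) ≤ n := by exact_mod_cast hn
  have := nsq_pos hy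
  have hq : 0 < l ^ 2 / ‖y‖ ^ 2 := by positivity
  rw [lap_Kel hu.smooth hl hy, hu.eq]
  unfold Kel
  rw [Real.mul_rpow (Real.rpow_pos_of_pos hq _).le (hu.pos _).le, ← Real.rpow_mul hq.le]
  have : ((n:ℝ) - 2) / 2 + 2 = ((n:ℝ) - 2) / 2 * (((n : ℝ) + 2) / ((n : ℝ) - 2)) := by
    have : (n:ℝ) - 2 ≠ 0 := by linarith
    field_simp
    ring
  rw [this]
  ring

/-- the difference `u - u_l` -/
noncomputable def Df (u : EuclideanSpace ℝ (Fin n) → ℝ) (l : ℝ)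
    (y : EuclideanSpace ℝ (Fin n)) : ℝ := u y + (-1) * Kel u l y

lemma Df_contDiffAt {u : 𝔼 → ℝ} (hu : Sol u) {l : ℝ} (hl : 0 < l) {y : 𝔼} (hy : l ≤ ‖y‖) :
    ContDiffAt ℝ 2 (Df u l) y := by
  have hy0 : y ≠ 0 := norm_pos_iff.mp (hl.trans_le hy)
  exact hu.smooth.contDiffAt.add (contDiffAt_const.mul (Kel_contDiffAt hu.smooth hl hy0))

lemma Df_lap (hn : 3 ≤ n) {u : 𝔼 → ℝ} (hu : Sol u) {l : ℝ} (hl : 0 < l) (hG : Good u l) {y : 𝔼}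
    (hy : l ≤ ‖y‖) : lap (Df u l) y ≤ 0 := by
  have hy0 : y ≠ 0 := norm_pos_iff.mp (hl.trans_le hy)
  have hn' : (3:ℝ) ≤ n := by exact_mod_cast hn
  unfold Df
  rw [lap_add_smul hu.smooth.contDiffAt (Kel_contDiffAt hu.smooth hl hy0), hu.eq,
    lap_Kel_sol hn hu hl hy0]
  have h1 : Kel u l y ^ (((n : ℝ) + 2) / ((n : ℝ) - 2)) ≤ u y ^ (((n : ℝ) + 2) / ((n : ℝ) - 2)) :=
    Real.rpow_le_rpow (Kel_pos hu.pos hl hy0).le (hG y hy)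
      (div_nonneg (by linarith) (by linarith))
  have h2 : 0 ≤ (n : ℝ) * ((n : ℝ) - 2) := mul_nonneg (by linarith) (by linarith)
  nlinarith [mul_le_mul_of_nonneg_left h1 h2]

lemma sphere_min (hn : 3 ≤ n) {R : ℝ} (hR : 0 < R) {f : 𝔼 → ℝ}
    (hc : ∀ y : 𝔼, ‖y‖ = R → ContinuousAt f y) (hf : ∀ y : 𝔼, ‖y‖ = R → 0 < f y) :
    ∃ m > 0, ∀ y : 𝔼, ‖y‖ = R → m ≤ f y := by
  have hne : (Metric.sphere (0:𝔼) R).Nonempty := by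
    have : Nonempty (Fin n) := ⟨⟨0, by omega⟩⟩
    exact NormedSpace.sphere_nonempty.mpr hR.le
  obtain ⟨z, hz, hmin⟩ := (isCompact_sphere (0:𝔼) R).exists_isMinOn hne (f := f)
    (fun y hy => (hc y (by simpa using hy)).continuousWithinAt)
  exact ⟨f z, hf z (by simpa using hz), fun y hy => hmin (by simpa using hy)⟩

lemma start (hn : 3 ≤ n) {u : 𝔼 → ℝ} (hu : Sol u) : ∃ l0 > 0, ∀ l, 0 < l → l ≤ l0 → Good u l := by
  have hn' : (3:ℝ) ≤ n := by exact_mod_cast hn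
  set a := ((n:ℝ) - 2) / 2 with ha
  have hapos : 0 < a := by rw [ha]; linarith
  have hg0 : 0 < gg u 0 := by
    simp only [gg, map_zero, add_zero]
    exact mul_pos hapos (hu.pos 0)
  obtain ⟨r, hr, hrb⟩ := Metric.eventually_nhds_iff.mp
    ((gg_continuous hu.smooth).continuousAt.eventually (lt_mem_nhds hg0))
  set r0 := r / 2 with hr0
  have hr0pos : 0 < r0 := by positivity
  have hgr : ∀ z : 𝔼, 0 < ‖z‖ → ‖z‖ ≤ r0 → 0 < gg u z := by
    intro z _ hz
    apply hrb
    rw [dist_zero_right]; linarith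
  obtain ⟨m, hm, hmb⟩ := sphere_min hn hr0pos (fun y _ => hu.smooth.continuous.continuousAt)
    (fun y _ => hu.pos y)
  have hfar := far_bound hn hr0pos (fun y _ => hu.smooth.contDiffAt) (f := u) (m := m) (fun y _ => by
    rw [hu.eq]
    have : 0 ≤ (n : ℝ) * ((n : ℝ) - 2) := mul_nonneg (by linarith) (by linarith)
    have := mul_nonneg this (Real.rpow_pos_of_pos (hu.pos y) (((n : ℝ) + 2) / ((n : ℝ) - 2))).le
    linarith) (fun y _ => (hu.pos y).le) hmb hm.le
  obtain ⟨M, hM⟩ := (isCompact_closedBall (0:𝔼) r0).bddAbove_image hu.smooth.continuous.continuousOn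
  have hMb : ∀ z : 𝔼, ‖z‖ ≤ r0 → u z ≤ M := fun z hz =>
    hM (mem_image_of_mem u (by simpa using hz))
  have ht : Tendsto (fun l : ℝ => (l ^ 2) ^ a * M) (𝓝 0) (𝓝 0) := by
    have h1 : Continuous (fun l : ℝ => (l ^ 2) ^ a * M) :=
      ((continuous_pow 2).rpow_const (fun _ => Or.inr hapos.le)).mul continuous_const
    have := h1.tendsto 0
    simpa [Real.zero_rpow hapos.ne'] using this
  have hmr : 0 < m * (r0 ^ 2) ^ a := by positivity
  obtain ⟨δ, hδ, hδb⟩ := Metric.eventually_nhds_iff.mp (ht.eventually (gt_mem_nhds hmr))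
  refine ⟨min (δ / 2) r0, by positivity, ?_⟩
  intro l hl hl0 y hy
  have hlδ : l ≤ δ / 2 := hl0.trans (min_le_left _ _)
  have hlr : l ≤ r0 := hl0.trans (min_le_right _ _)
  have hy0 : 0 < ‖y‖ := hl.trans_le hy
  by_cases hyr : ‖y‖ ≤ r0
  · exact near_le hu.smooth hgr hl hy hyr (by positivity)
  push Not at hyr
  refine le_trans ?_ (hfar y hyr.le)
  unfold Kel
  rw [Real.div_rpow (by positivity) (by positivity), Real.div_rpow (by positivity) (by positivity),
    ← ha]
  have h1 : (l ^ 2) ^ a * M < m * (r0 ^ 2) ^ a := hδb (by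
    rw [dist_zero_right, Real.norm_of_nonneg hl.le]; linarith)
  have h2 : u ((l ^ 2 / ‖y‖ ^ 2) • y) ≤ M := by
    apply hMb
    rw [norm_smul, Real.norm_of_nonneg (by positivity)]
    have : l ^ 2 / ‖y‖ ^ 2 * ‖y‖ = l * (l / ‖y‖) := by field_simp
    rw [this]
    have : l / ‖y‖ ≤ 1 := by rw [div_le_one hy0]; exact hy
    nlinarith
  calc (l ^ 2) ^ a / (‖y‖ ^ 2) ^ a * u ((l ^ 2 / ‖y‖ ^ 2) • y)
      ≤ (l ^ 2) ^ a / (‖y‖ ^ 2) ^ a * M := by gcongr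
    _ = ((l ^ 2) ^ a * M) / (‖y‖ ^ 2) ^ a := by ring
    _ ≤ (m * (r0 ^ 2) ^ a) / (‖y‖ ^ 2) ^ a := by gcongr
    _ = _ := by ring

lemma hopf (hn : 3 ≤ n) {u : 𝔼 → ℝ} (hu : Sol u) {l : ℝ} (hl : 0 < l) (hG : Good u l)
    (hpos : ∀ y : 𝔼, l < ‖y‖ → 0 < Df u l y) {z : 𝔼} (hz : ‖z‖ = l) : 0 < gg u z := by
  have hn' : (3:ℝ) ≤ n := by exact_mod_cast hn
  set a := ((n:ℝ) - 2) / 2 with ha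
  have hapos : 0 < a := by rw [ha]; linarith
  have hz0 : z ≠ 0 := norm_pos_iff.mp (by linarith)
  obtain ⟨m, hm, hmb⟩ := sphere_min hn (R := 2 * l) (by linarith) (f := Df u l)
    (fun y hy => (Df_contDiffAt hu hl (by linarith)).continuousAt) (fun y hy => hpos y (by linarith))
  set p1 := (l ^ 2) ^ (-a) with hp1
  set p2 := ((2 * l) ^ 2) ^ (-a) with hp2
  have hp1pos : 0 < p1 := by positivity
  have hlt : p2 < p1 := by
    apply Real.rpow_lt_rpow_of_neg (by positivity) (by gcongr; linarith) (by linarith)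
  have hP : ∀ x : 𝔼, P a x = (‖x‖ ^ 2) ^ (-a) := fun x => rfl
  set B := m / (p1 - p2) with hB
  have hBpos : 0 < B := div_pos hm (by linarith)
  have hcmp := annulus_compare hn hl (f := Df u l) (R := 2 * l)
    (fun x h _ => (Df_contDiffAt hu hl h).continuousAt)
    (fun x h _ => Df_contDiffAt hu hl h.le) (fun x h _ => Df_lap hn hu hl hG h.le) (B * p1) (-B) ?_
  · have hd : HasDerivAt (fun t : ℝ => (u (t • z) - Kel u ‖z‖ (t • z)) -
        B * (p1 - t ^ (-(2 * a)) * p1)) (2 * gg u z - B * (2 * a * p1)) 1 := by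
      have h5 := Real.hasDerivAt_rpow_const (x := 1) (p := -(2 * a)) (Or.inl one_ne_zero)
      refine ((ray_deriv hu.smooth hz0).sub
        (((h5.mul_const p1).const_sub p1).const_mul B)).congr_deriv ?_
      simp
    have := slope_nonneg hd (by simp [Kel_sphere u hz0]) ?_
    · have h6 : 0 < B * (2 * a * p1) := by positivity
      linarith
    · intro t ht ht2
      have hnorm : ‖t • z‖ = t * l := by rw [norm_smul, Real.norm_of_nonneg (by linarith), hz]
      have h7 := hcmp (t • z) (by rw [hnorm]; nlinarith) (by rw [hnorm]; nlinarith)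
      have h8 : P a (t • z) = t ^ (-(2 * a)) * p1 := by
        rw [hP, hnorm, mul_pow, Real.mul_rpow (by positivity) (by positivity), hp1]
        congr 1
        rw [← Real.rpow_natCast, ← Real.rpow_mul (by linarith)]
        congr 1
        push_cast; ring
      rw [← ha, h8] at h7
      simp only [Df] at h7
      rw [hz]
      linarith
  · intro x hx
    rcases hx with hx | hx
    · have hx0 : x ≠ 0 := norm_pos_iff.mp (by linarith)
      rw [← ha, hP, hx, ← hp1, Df, ← hx, Kel_sphere u hx0]
      linarith
    · rw [← ha, hP, hx, ← hp2]
      have h1 := hmb x hx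
      have h4 : B * (p1 - p2) = m := by
        rw [hB]; field_simp [(sub_pos.mpr hlt).ne']
      linarith

lemma Kel_eq (u : 𝔼 → ℝ) {l : ℝ} (y : 𝔼) :
    Kel u l y = ((l ^ 2) ^ (((n:ℝ) - 2) / 2) * u ((l ^ 2) • (‖y‖ ^ 2)⁻¹ • y)) /
      (‖y‖ ^ 2) ^ (((n:ℝ) - 2) / 2) := by
  unfold Kel
  rw [Real.div_rpow (by positivity) (by positivity), smul_smul, div_eq_mul_inv (l ^ 2)]
  ring

lemma extend (hn : 3 ≤ n) {u : 𝔼 → ℝ} (hu : Sol u) {l : ℝ} (hl : 0 < l) (hG : Good u l)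
    {y0 : 𝔼} (hy0 : l ≤ ‖y0‖) (hne : Kel u l y0 ≠ u y0) :
    ∃ ε > 0, ∀ μ, l ≤ μ → μ ≤ l + ε → Good u μ := by
  have hn' : (3:ℝ) ≤ n := by exact_mod_cast hn
  set a := ((n:ℝ) - 2) / 2 with ha
  have hapos : 0 < a := by rw [ha]; linarith
  have hy0' : l < ‖y0‖ := by
    refine lt_of_le_of_ne hy0 fun h => hne ?_
    rw [h]; exact Kel_sphere u (norm_pos_iff.mp (by linarith))
  have hf0 : ∀ y : 𝔼, l ≤ ‖y‖ → 0 ≤ Df u l y := by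
    intro y hy
    have := hG y hy
    simp only [Df]; linarith
  have hpos : ∀ y : 𝔼, l < ‖y‖ → 0 < Df u l y := by
    refine exterior_pos hn hl (fun y hy => Df_contDiffAt hu hl hy.le)
      (fun y hy => Df_lap hn hu hl hG hy.le) (fun y hy => hf0 y hy.le) hy0' ?_
    have := lt_of_le_of_ne (hG y0 hy0) hne
    simp only [Df]; linarith
  have hgs : Metric.sphere (0:𝔼) l ⊆ {z | 0 < gg u z} := fun z hz =>
    hopf hn hu hl hG hpos (by simpa using hz)
  obtain ⟨δ, hδ, hδb⟩ := (isCompact_sphere (0:𝔼) l).exists_thickening_subset_open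
    (isOpen_lt continuous_const (gg_continuous hu.smooth)) hgs
  set δ1 := min δ l / 2 with hδ1
  have hδ1pos : 0 < δ1 := by positivity
  have hδ1δ : δ1 < δ := by
    have := min_le_left δ l
    have : δ1 ≤ δ / 2 := by rw [hδ1]; linarith
    linarith
  have hδ1l : δ1 < l := by
    have := min_le_right δ l
    have : δ1 ≤ l / 2 := by rw [hδ1]; linarith
    linarith
  have hgg : ∀ z : 𝔼, l - δ1 < ‖z‖ → ‖z‖ ≤ l + δ1 → 0 < gg u z := by
    intro z h1 h2
    apply hδb
    have hz : 0 < ‖z‖ := by linarith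
    rw [Metric.mem_thickening_iff]
    refine ⟨(l / ‖z‖) • z, ?_, ?_⟩
    · rw [mem_sphere_zero_iff_norm, norm_smul, Real.norm_of_nonneg (by positivity)]
      field_simp
    · have : z - (l / ‖z‖) • z = (1 - l / ‖z‖) • z := by rw [sub_smul, one_smul]
      rw [dist_eq_norm, this, norm_smul, Real.norm_eq_abs]
      have : |1 - l / ‖z‖| * ‖z‖ = |‖z‖ - l| := by
        rw [← abs_of_pos hz, ← abs_mul, abs_of_pos hz]
        congr 1
        field_simp
      rw [this, abs_lt]
      constructor <;> linarith
  set R := l + δ1 with hR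
  have hRpos : 0 < R := by linarith
  have hlR : l < R := by linarith
  obtain ⟨m, hm, hmb⟩ := sphere_min hn hRpos (f := Df u l)
    (fun y hy => (Df_contDiffAt hu hl (by linarith)).continuousAt) (fun y hy => hpos y (by linarith))
  have hfar := far_bound hn hRpos (f := Df u l) (fun y hy => Df_contDiffAt hu hl (hlR.le.trans hy))
    (fun y hy => Df_lap hn hu hl hG (hlR.trans hy).le) (fun y hy => hf0 y (hlR.le.trans hy)) hmb hm.le
  have hmR : 0 < m * (R ^ 2) ^ a := by positivity
  have hev : ∀ᶠ μ in 𝓝 l, ∀ x ∈ Metric.closedBall (0:𝔼) R⁻¹,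
      (μ ^ 2) ^ a * u ((μ ^ 2) • x) - (l ^ 2) ^ a * u ((l ^ 2) • x) < m * (R ^ 2) ^ a := by
    apply (isCompact_closedBall (0:𝔼) R⁻¹).eventually_forall_of_forall_eventually
    intro x _
    have hc : Continuous (fun p : ℝ × 𝔼 => (p.1 ^ 2) ^ a * u ((p.1 ^ 2) • p.2)
        - (l ^ 2) ^ a * u ((l ^ 2) • p.2)) := by
      have h1 := hu.smooth.continuous
      have h2 : Continuous (fun p : ℝ × 𝔼 => (p.1 ^ 2) ^ a) :=
        (continuous_fst.pow 2).rpow_const (fun _ => Or.inr hapos.le)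
      fun_prop
    apply hc.continuousAt.eventually (gt_mem_nhds _)
    simpa using hmR
  obtain ⟨ε0, hε0, hε0b⟩ := Metric.eventually_nhds_iff.mp hev
  refine ⟨min (ε0 / 2) δ1, by positivity, ?_⟩
  intro μ hμ1 hμ2 y hy
  have hμ3 : μ ≤ l + ε0 / 2 := hμ2.trans (by gcongr; exact min_le_left _ _)
  have hμ4 : μ ≤ R := hμ2.trans (by rw [hR]; gcongr; exact min_le_right _ _)
  have hμpos : 0 < μ := hl.trans_le hμ1
  have hypos : 0 < ‖y‖ := hμpos.trans_le hy
  by_cases hyR : ‖y‖ ≤ R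
  · refine near_le hu.smooth hgg hμpos hy hyR ?_
    rw [lt_div_iff₀ hypos]
    calc (l - δ1) * ‖y‖ ≤ (l - δ1) * R := by
          apply mul_le_mul_of_nonneg_left hyR; linarith
      _ < l ^ 2 := by rw [hR]; nlinarith
      _ ≤ μ ^ 2 := by gcongr
  · push Not at hyR
    have h1 := hfar y hyR.le
    have h2 := hε0b (y := μ) (by rw [Real.dist_eq, abs_lt]; constructor <;> linarith)
      ((‖y‖ ^ 2)⁻¹ • y) (by
        rw [mem_closedBall_zero_iff, norm_smul, Real.norm_of_nonneg (by positivity)]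
        have : (‖y‖ ^ 2)⁻¹ * ‖y‖ = ‖y‖⁻¹ := by field_simp
        rw [this]
        gcongr)
    rw [Real.div_rpow (by positivity) (by positivity)] at h1
    simp only [Df] at h1
    rw [Kel_eq] at h1
    rw [Kel_eq]
    rw [← ha] at *
    have h3 : 0 < (‖y‖ ^ 2) ^ a := by positivity
    have h4 : ((μ ^ 2) ^ a * u ((μ ^ 2) • (‖y‖ ^ 2)⁻¹ • y)) / (‖y‖ ^ 2) ^ a ≤
        (m * (R ^ 2) ^ a + (l ^ 2) ^ a * u ((l ^ 2) • (‖y‖ ^ 2)⁻¹ • y)) / (‖y‖ ^ 2) ^ a := by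
      gcongr; linarith
    refine h4.trans ?_
    rw [add_div, mul_div_assoc]
    linarith

lemma Kel_inv {u : 𝔼 → ℝ} {l : ℝ} (hl : 0 < l) (h : ∀ y : 𝔼, l ≤ ‖y‖ → Kel u l y = u y) :
    ∀ y : 𝔼, y ≠ 0 → Kel u l y = u y := by
  intro y hy
  have hyn : 0 < ‖y‖ := norm_pos_iff.mpr hy
  by_cases hly : l ≤ ‖y‖
  · exact h y hly
  push Not at hly
  set q := l ^ 2 / ‖y‖ ^ 2 with hq
  have hqpos : 0 < q := by positivity
  have hnorm : ‖q • y‖ = l ^ 2 / ‖y‖ := by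
    rw [norm_smul, Real.norm_of_nonneg hqpos.le, hq]; field_simp
  have h1 := h (q • y) (by
    rw [hnorm, le_div_iff₀ hyn]; nlinarith)
  have hq' : l ^ 2 / ‖q • y‖ ^ 2 = q⁻¹ := by
    rw [hnorm, hq]; field_simp
  unfold Kel at h1
  rw [hq', smul_smul, inv_mul_cancel₀ hqpos.ne', one_smul, Real.inv_rpow hqpos.le] at h1
  unfold Kel
  rw [← hq, ← h1]
  have : 0 < q ^ (((n:ℝ) - 2) / 2) := Real.rpow_pos_of_pos hqpos _
  field_simp

lemma dichotomy (hn : 3 ≤ n) {u : 𝔼 → ℝ} (hu : Sol u) :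
    (∀ μ, 0 < μ → Good u μ) ∨ ∃ l > 0, ∀ y : 𝔼, y ≠ 0 → Kel u l y = u y := by
  have hn' : (3:ℝ) ≤ n := by exact_mod_cast hn
  set a := ((n:ℝ) - 2) / 2 with ha
  have hapos : 0 < a := by rw [ha]; linarith
  set S : Set ℝ := {l | 0 < l ∧ ∀ μ, 0 < μ → μ ≤ l → Good u μ} with hS
  obtain ⟨l0, hl0, hl0b⟩ := start hn hu
  have hl0S : l0 ∈ S := ⟨hl0, hl0b⟩
  by_cases hbdd : BddAbove S
  · right
    set L := sSup S with hL
    have hLpos : 0 < L := hl0.trans_le (le_csSup hbdd hl0S)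
    have hlt : ∀ μ, 0 < μ → μ < L → Good u μ := by
      intro μ h1 h2
      obtain ⟨s, hs, hs2⟩ := exists_lt_of_lt_csSup ⟨l0, hl0S⟩ h2
      exact hs.2 μ h1 hs2.le
    have hGL : Good u L := by
      intro y hy
      have hc : Continuous (fun μ : ℝ => Kel u μ y) := by
        unfold Kel
        have h1 := hu.smooth.continuous
        have h2 : Continuous (fun μ : ℝ => (μ ^ 2 / ‖y‖ ^ 2) ^ a) :=
          ((continuous_id.pow 2).div_const _).rpow_const (fun _ => Or.inr hapos.le)
        exact h2.mul (h1.comp (by fun_prop))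
      have ht : Tendsto (fun μ : ℝ => Kel u μ y) (𝓝[<] L) (𝓝 (Kel u L y)) :=
        hc.continuousAt.tendsto.mono_left nhdsWithin_le_nhds
      refine le_of_tendsto ht ?_
      have : Ioi (0:ℝ) ∈ 𝓝[<] L := mem_nhdsWithin_of_mem_nhds (Ioi_mem_nhds hLpos)
      filter_upwards [self_mem_nhdsWithin, this] with μ h1 h2
      exact hlt μ h2 h1 y ((le_of_lt h1).trans hy)
    refine ⟨L, hLpos, Kel_inv hLpos ?_⟩
    intro y hy
    by_contra hne
    obtain ⟨ε, hε, hεb⟩ := extend hn hu hLpos hGL hy hne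
    have : L + ε ∈ S := by
      refine ⟨by linarith, fun μ h1 h2 => ?_⟩
      rcases lt_or_ge μ L with h | h
      · exact hlt μ h1 h
      · exact hεb μ h h2
    have := le_csSup hbdd this
    linarith
  · left
    intro μ hμ
    rw [not_bddAbove_iff] at hbdd
    obtain ⟨s, hs, hs2⟩ := hbdd μ
    exact hs.2 μ hμ hs2.le

lemma Sol.shift {u : 𝔼 → ℝ} (hu : Sol u) (c : 𝔼) : Sol (fun y => u (c + y)) where
  smooth := hu.smooth.comp (contDiff_const.add contDiff_id)
  pos := fun x => hu.pos _
  eq := fun x => by rw [lap_comp_add]; exact hu.eq _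

/-- the Kelvin transform centred at `c`, seen from infinity in the direction `θ` -/
noncomputable def GG (u : EuclideanSpace ℝ (Fin n) → ℝ) (c : EuclideanSpace ℝ (Fin n)) (l : ℝ)
    (θ : EuclideanSpace ℝ (Fin n)) (τ : ℝ) : ℝ :=
  (l ^ 2 / ‖θ - τ • c‖ ^ 2) ^ (((n:ℝ) - 2) / 2)
    * u (c + (l ^ 2 * τ / ‖θ - τ • c‖ ^ 2) • (θ - τ • c))

lemma Kel_GG (u : 𝔼 → ℝ) (c : 𝔼) (l : ℝ) {θ : 𝔼} {τ : ℝ} (hτ : τ ≠ 0) :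
    Kel (fun y => u (c + y)) l (τ⁻¹ • θ - c) = (τ ^ 2) ^ (((n:ℝ) - 2) / 2) * GG u c l θ τ := by
  have h1 : τ⁻¹ • θ - c = τ⁻¹ • (θ - τ • c) := by
    rw [smul_sub, smul_smul, inv_mul_cancel₀ hτ, one_smul]
  have h2 : l ^ 2 / ‖τ⁻¹ • (θ - τ • c)‖ ^ 2 = τ ^ 2 * (l ^ 2 / ‖θ - τ • c‖ ^ 2) := by
    rw [norm_smul, mul_pow, Real.norm_eq_abs, sq_abs, inv_pow]
    rw [div_mul_eq_div_div, div_inv_eq_mul]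
    ring
  unfold Kel GG
  rw [h1, h2, Real.mul_rpow (by positivity) (by positivity), smul_smul]
  have h3 : τ ^ 2 * (l ^ 2 / ‖θ - τ • c‖ ^ 2) * τ⁻¹ = l ^ 2 * τ / ‖θ - τ • c‖ ^ 2 := by
    field_simp
  rw [h3]
  ring

lemma GG_zero (u : 𝔼 → ℝ) (c : 𝔼) (l : ℝ) {θ : 𝔼} (hθ : ‖θ‖ = 1) :
    GG u c l θ 0 = (l ^ 2) ^ (((n:ℝ) - 2) / 2) * u c := by
  simp [GG, hθ]

lemma GG_deriv {u : 𝔼 → ℝ} (hu : ContDiff ℝ 2 u) (c : 𝔼) {l : ℝ} (hl : 0 < l) {θ : 𝔼}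
    (hθ : ‖θ‖ = 1) :
    HasDerivAt (GG u c l θ) ((l ^ 2) ^ (((n:ℝ) - 2) / 2) *
      (((n:ℝ) - 2) * inner ℝ θ c * u c + l ^ 2 * fderiv ℝ u c θ)) 0 := by
  have hw : HasDerivAt (fun τ : ℝ => θ - τ • c) (-c) 0 := by
    have := ((hasDerivAt_id (0:ℝ)).smul_const c).const_sub θ
    simpa using this
  have hN : HasDerivAt (fun τ : ℝ => ‖θ - τ • c‖ ^ 2) (-2 * inner ℝ θ c) 0 := by
    have := hw.norm_sq
    simpa [inner_neg_right] using this
  have hN0 : ‖θ - (0:ℝ) • c‖ ^ 2 ≠ 0 := by simp [hθ]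
  have hq : HasDerivAt (fun τ : ℝ => l ^ 2 / ‖θ - τ • c‖ ^ 2) (l ^ 2 * (2 * inner ℝ θ c)) 0 := by
    have := (hasDerivAt_const (0:ℝ) (l^2)).div hN hN0
    refine this.congr_deriv ?_
    simp [hθ]
  have hp := hq.rpow_const (p := ((n:ℝ) - 2) / 2) (Or.inl (by simp [hθ, hl.ne']))
  have hs : HasDerivAt (fun τ : ℝ => l ^ 2 * τ / ‖θ - τ • c‖ ^ 2) (l ^ 2) 0 := by
    have := ((hasDerivAt_id (0:ℝ)).const_mul (l^2)).div hN hN0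
    refine this.congr_deriv ?_
    simp [hθ]
  have hv : HasDerivAt (fun τ : ℝ => c + (l ^ 2 * τ / ‖θ - τ • c‖ ^ 2) • (θ - τ • c))
      (l ^ 2 • θ) 0 := by
    have := (hs.smul hw).const_add c
    refine this.congr_deriv ?_
    simp
  have hu1 : HasFDerivAt u (fderiv ℝ u c)
      (c + (l ^ 2 * (0:ℝ) / ‖θ - (0:ℝ) • c‖ ^ 2) • (θ - (0:ℝ) • c)) := by
    have : c + (l ^ 2 * (0:ℝ) / ‖θ - (0:ℝ) • c‖ ^ 2) • (θ - (0:ℝ) • c) = c := by simp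
    rw [this]
    exact (hu.differentiable (by norm_num) c).hasFDerivAt
  have hU := hu1.comp_hasDerivAt (0:ℝ) hv
  have := hp.mul hU
  refine this.congr_deriv ?_
  have hl2 : (l^2) ≠ 0 := by positivity
  simp [hθ, Real.rpow_sub_one hl2]
  field_simp

/-- the reflection alternative: `u` is its own Kelvin transform at `c` -/
def Refl (u : EuclideanSpace ℝ (Fin n) → ℝ) (c : EuclideanSpace ℝ (Fin n)) (l : ℝ) : Prop :=
  0 < l ∧ ∀ y : EuclideanSpace ℝ (Fin n), y ≠ 0 → Kel (fun y => u (c + y)) l y = u (c + y)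

lemma dir_tendsto (c : 𝔼) {θ : 𝔼} (hθ : ‖θ‖ = 1) (μ : ℝ) :
    ∀ᶠ τ in 𝓝[≠] (0:ℝ), τ ≠ 0 ∧ τ⁻¹ • θ - c ≠ 0 ∧ μ ≤ ‖τ⁻¹ • θ - c‖ := by
  have hc : ContinuousAt (fun τ : ℝ => ‖θ - τ • c‖ - (|μ| + 1) * |τ|) 0 := by fun_prop
  have h1 : ∀ᶠ τ in 𝓝 (0:ℝ), 0 < ‖θ - τ • c‖ - (|μ| + 1) * |τ| := by
    apply hc.eventually_const_lt
    simp [hθ]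
  filter_upwards [h1.filter_mono nhdsWithin_le_nhds, self_mem_nhdsWithin] with τ h hτ
  have hτ : τ ≠ 0 := hτ
  have e1 : τ⁻¹ • θ - c = τ⁻¹ • (θ - τ • c) := by
    rw [smul_sub, smul_smul, inv_mul_cancel₀ hτ, one_smul]
  have hpos : 0 < |τ| := abs_pos.2 hτ
  have e2 : |μ| + 1 ≤ ‖τ⁻¹ • θ - c‖ := by
    rw [e1, norm_smul, norm_inv, Real.norm_eq_abs, inv_mul_eq_div, le_div_iff₀ hpos]
    linarith
  refine ⟨hτ, ?_, by linarith [le_abs_self μ]⟩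
  intro h0
  rw [h0, norm_zero] at e2
  linarith [abs_nonneg μ]

lemma Refl.far {u : 𝔼 → ℝ} {c : 𝔼} {l : ℝ} (h : Refl u c l) {θ : 𝔼} (hθ : ‖θ‖ = 1) :
    ∀ᶠ τ in 𝓝[≠] (0:ℝ), u (τ⁻¹ • θ) = (τ ^ 2) ^ (((n:ℝ) - 2) / 2) * GG u c l θ τ := by
  filter_upwards [dir_tendsto c hθ 0] with τ hτ
  rw [← Kel_GG u c l hτ.1, h.2 _ hτ.2.1]
  congr 1
  abel

lemma GG_tendsto {u : 𝔼 → ℝ} (hu : ContDiff ℝ 2 u) (c : 𝔼) {l : ℝ} (hl : 0 < l) {θ : 𝔼}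
    (hθ : ‖θ‖ = 1) : Tendsto (GG u c l θ) (𝓝[≠] 0) (𝓝 ((l ^ 2) ^ (((n:ℝ) - 2) / 2) * u c)) := by
  have := (GG_deriv hu c hl hθ).continuousAt.tendsto
  rw [GG_zero u c l hθ] at this
  exact this.mono_left nhdsWithin_le_nhds

lemma exists_unit (hn : 3 ≤ n) : ∃ θ : 𝔼, ‖θ‖ = 1 :=
  ⟨EuclideanSpace.single ⟨0, by omega⟩ 1, by simp⟩

lemma not_all_good_of_refl (hn : 3 ≤ n) {u : 𝔼 → ℝ} (hu : Sol u) {c x : 𝔼} {l : ℝ}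
    (hB : Refl u c l) (hA : ∀ μ, 0 < μ → Good (fun y => u (x + y)) μ) : False := by
  have hn' : (3:ℝ) ≤ n := by exact_mod_cast hn
  obtain ⟨θ, hθ⟩ := exists_unit hn
  have key : ∀ μ, 0 < μ → (μ ^ 2) ^ (((n:ℝ) - 2) / 2) * u x ≤
      (l ^ 2) ^ (((n:ℝ) - 2) / 2) * u c := by
    intro μ hμ
    refine le_of_tendsto_of_tendsto (GG_tendsto hu.smooth x hμ hθ)
      (GG_tendsto hu.smooth c hB.1 hθ) ?_
    filter_upwards [hB.far hθ, dir_tendsto x hθ μ] with τ h1 h2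
    have h3 := hA μ hμ _ h2.2.2
    rw [Kel_GG u x μ h2.1] at h3
    beta_reduce at h3
    rw [add_sub_cancel, h1] at h3
    have : 0 < (τ ^ 2) ^ (((n:ℝ) - 2) / 2) := by
      have := h2.1
      positivity
    exact le_of_mul_le_mul_left h3 this
  have hx := hu.pos x
  have ha : 0 < ((n:ℝ) - 2) / 2 := by linarith
  have hK : 0 < (l ^ 2) ^ (((n:ℝ) - 2) / 2) * u c := by
    have := hu.pos c
    have := hB.1
    positivity
  set K := (l ^ 2) ^ (((n:ℝ) - 2) / 2) * u c
  set M := (K / u x + 1) ^ (1 / (((n:ℝ) - 2) / 2)) with hM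
  have hMp : 0 < M := by positivity
  have h1 := key (Real.sqrt M) (Real.sqrt_pos.2 hMp)
  rw [Real.sq_sqrt hMp.le, hM, ← Real.rpow_mul (by positivity), one_div,
    inv_mul_cancel₀ ha.ne', Real.rpow_one, add_mul, div_mul_cancel₀ _ hx.ne'] at h1
  linarith

lemma not_all_good (hn : 3 ≤ n) {u : 𝔼 → ℝ} (hu : Sol u)
    (hA : ∀ x : 𝔼, ∀ μ, 0 < μ → Good (fun y => u (x + y)) μ) : False := by
  have hn' : (3:ℝ) ≤ n := by exact_mod_cast hn
  have h1 : ∀ w z : 𝔼, z ≠ 0 → 0 ≤ ((n:ℝ) - 2) / 2 * u w + fderiv ℝ u w z := by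
    intro w z hz
    have := gg_nonneg_of_good (hu.shift (w - z)).smooth hz (hA (w - z) ‖z‖ (norm_pos_iff.2 hz))
    unfold gg at this
    rw [fderiv_comp_add_left] at this
    beta_reduce at this
    rwa [sub_add_cancel] at this
  have h2 : ∀ w z : 𝔼, 0 ≤ fderiv ℝ u w z := by
    intro w z
    by_contra! hneg
    have hz : z ≠ 0 := by rintro rfl; simp at hneg
    have hw := hu.pos w
    set t := (((n:ℝ) - 2) / 2 * u w + 1) / (-(fderiv ℝ u w z)) with ht
    have ht0 : 0 < t := by
      apply div_pos _ (by linarith)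
      have : 0 < ((n:ℝ) - 2) / 2 * u w := by apply mul_pos _ hw; linarith
      linarith
    have := h1 w (t • z) (smul_ne_zero ht0.ne' hz)
    rw [map_smul, smul_eq_mul] at this
    have h3 : t * (-(fderiv ℝ u w z)) = ((n:ℝ) - 2) / 2 * u w + 1 :=
      div_mul_cancel₀ _ (by linarith)
    linarith
  have h3 : ∀ w : 𝔼, fderiv ℝ u w = 0 := by
    intro w
    ext z
    have a1 := h2 w z
    have a2 := h2 w (-z)
    rw [map_neg] at a2
    simp only [ContinuousLinearMap.zero_apply]
    linarith
  have h4 : lap u 0 = 0 := by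
    unfold lap
    simp [h3]
  have h5 := hu.eq 0
  rw [h4] at h5
  have h6 : 0 < (n:ℝ)*((n:ℝ)-2)*u 0 ^ (((n:ℝ)+2)/((n:ℝ)-2)) := by
    have := hu.pos 0
    have : (0:ℝ) < (n:ℝ) - 2 := by linarith
    positivity
  linarith

lemma all_refl (hn : 3 ≤ n) {u : 𝔼 → ℝ} (hu : Sol u) : ∀ x, ∃ l, Refl u x l := by
  have hB : ∃ c l, Refl u c l := by
    by_contra! h
    refine not_all_good hn hu fun x => ?_
    rcases dichotomy hn (hu.shift x) with h1 | ⟨l, hl, h1⟩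
    · exact h1
    · exact absurd ⟨hl, h1⟩ (h x l)
  obtain ⟨c, l, hc⟩ := hB
  intro x
  rcases dichotomy hn (hu.shift x) with h1 | ⟨l, hl, h1⟩
  · exact (not_all_good_of_refl hn hu hc h1).elim
  · exact ⟨l, hl, h1⟩

lemma refl_match {u : 𝔼 → ℝ} (hu : Sol u) {c x : 𝔼} {l m : ℝ} (hc : Refl u c l)
    (hx : Refl u x m) {θ : 𝔼} (hθ : ‖θ‖ = 1) :
    (l ^ 2) ^ (((n:ℝ) - 2) / 2) * u c = (m ^ 2) ^ (((n:ℝ) - 2) / 2) * u x ∧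
    (l ^ 2) ^ (((n:ℝ) - 2) / 2) *
      (((n:ℝ) - 2) * inner ℝ θ c * u c + l ^ 2 * fderiv ℝ u c θ) =
    (m ^ 2) ^ (((n:ℝ) - 2) / 2) *
      (((n:ℝ) - 2) * inner ℝ θ x * u x + m ^ 2 * fderiv ℝ u x θ) := by
  have hE : GG u c l θ =ᶠ[𝓝[≠] 0] GG u x m θ := by
    filter_upwards [hc.far hθ, hx.far hθ, self_mem_nhdsWithin] with τ h1 h2 hτ
    have hτ : τ ≠ 0 := hτ
    have : (τ ^ 2) ^ (((n:ℝ) - 2) / 2) ≠ 0 := by positivity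
    exact mul_left_cancel₀ this (h1.symm.trans h2)
  have h0 : (l ^ 2) ^ (((n:ℝ) - 2) / 2) * u c = (m ^ 2) ^ (((n:ℝ) - 2) / 2) * u x :=
    tendsto_nhds_unique ((GG_tendsto hu.smooth c hc.1 hθ).congr' hE)
      (GG_tendsto hu.smooth x hx.1 hθ)
  refine ⟨h0, ?_⟩
  have hE' : GG u x m θ =ᶠ[𝓝 0] GG u c l θ := by
    have := eventually_nhdsWithin_iff.1 hE
    filter_upwards [this] with τ h
    by_cases hτ : τ = 0
    · rw [hτ, GG_zero u c l hθ, GG_zero u x m hθ, h0]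
    · exact (h hτ).symm
  exact ((GG_deriv hu.smooth c hc.1 hθ).congr_of_eventuallyEq hE').unique
    (GG_deriv hu.smooth x hx.1 hθ)

lemma v_deriv (hn : 3 ≤ n) {u : 𝔼 → ℝ} (hu : Sol u) :
    ∃ A > 0, ∃ b : 𝔼, ∀ x θ : 𝔼, ‖θ‖ = 1 →
      -(1 / (((n:ℝ) - 2) / 2)) * u x ^ (-(1 / (((n:ℝ) - 2) / 2)) - 1) * fderiv ℝ u x θ
        = 2 * A * inner ℝ (x - b) θ := by
  have hn' : (3:ℝ) ≤ n := by exact_mod_cast hn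
  obtain ⟨l, hl⟩ := all_refl hn hu 0
  obtain ⟨a, ha⟩ : ∃ a, a = ((n:ℝ) - 2) / 2 := ⟨_, rfl⟩
  have hap : 0 < a := by rw [ha]; linarith
  have h2a : (n:ℝ) - 2 = 2 * a := by rw [ha]; ring
  have hl0 := hl.1
  obtain ⟨α, hα⟩ : ∃ α, α = (l ^ 2) ^ a * u 0 := ⟨_, rfl⟩
  have hαp : 0 < α := by
    have := hu.pos 0
    rw [hα]; positivity
  obtain ⟨B, hB⟩ : ∃ B, B = α ^ (1 / a) := ⟨_, rfl⟩
  have hBp : 0 < B := by rw [hB]; positivity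
  set g : 𝔼 := (InnerProductSpace.toDual ℝ 𝔼).symm (fderiv ℝ u 0) with hg
  have hgi : ∀ θ, fderiv ℝ u 0 θ = inner ℝ g θ := fun θ => by
    rw [hg, InnerProductSpace.toDual_symm_apply]
  refine ⟨B⁻¹, by positivity, ((l ^ 2) ^ a * l ^ 2 / (2 * a * α)) • g, ?_⟩
  intro x θ hθ
  obtain ⟨m, hm⟩ := all_refl hn hu x
  obtain ⟨h0, h1⟩ := refl_match hu hl hm hθ
  rw [← ha] at h0 h1 ⊢
  rw [h2a, inner_zero_right, hgi] at h1
  rw [← hα] at h0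
  have hm0 := hm.1
  have hx := hu.pos x
  have hma : (m ^ 2) ^ a = α / u x := by rw [h0]; field_simp
  have hm2 : m ^ 2 = B * u x ^ (-(1 / a)) := by
    have : m ^ 2 = ((m ^ 2) ^ a) ^ (1 / a) := by
      rw [← Real.rpow_mul (by positivity), mul_one_div_cancel hap.ne', Real.rpow_one]
    rw [this, hma, Real.div_rpow hαp.le hx.le, Real.rpow_neg hx.le, hB, div_eq_mul_inv]
  rw [hma, hm2] at h1
  rw [Real.rpow_sub_one hx.ne', inner_sub_left, inner_smul_left, real_inner_comm]
  simp only [conj_trivial]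
  generalize u x ^ (-(1 / a)) = V at *
  generalize fderiv ℝ u x θ = D at *
  generalize inner ℝ θ x = p at *
  generalize inner ℝ g θ = q at *
  generalize (l ^ 2) ^ a = L at *
  field_simp at h1 ⊢
  linarith

lemma v_form (hn : 3 ≤ n) {u : 𝔼 → ℝ} (hu : Sol u) :
    ∃ A > 0, ∃ C > 0, ∃ b : 𝔼, ∀ x : 𝔼, u x = (A * ‖x - b‖ ^ 2 + C) ^ (-(((n:ℝ) - 2) / 2)) := by
  have hn' : (3:ℝ) ≤ n := by exact_mod_cast hn
  obtain ⟨A, hA, b, h⟩ := v_deriv hn hu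
  obtain ⟨a, ha⟩ : ∃ a, a = ((n:ℝ) - 2) / 2 := ⟨_, rfl⟩
  have hap : 0 < a := by rw [ha]; linarith
  rw [← ha] at h ⊢
  have hv : ∀ x, HasFDerivAt (fun y => u y ^ (-(1 / a)))
      ((-(1 / a) * u x ^ (-(1 / a) - 1)) • fderiv ℝ u x) x := fun x =>
    (hu.smooth.differentiable (by norm_num) x).hasFDerivAt.rpow_const (Or.inl (hu.pos x).ne')
  have hq : ∀ x : 𝔼, HasFDerivAt (fun y : 𝔼 => A * ‖y - b‖ ^ 2)
      (A • (2 • (innerSL ℝ (x - b)))) x := by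
    intro x
    have := (((hasFDerivAt_id x).sub_const b).norm_sq).const_mul A
    simpa using this
  have hz : ∀ x : 𝔼, fderiv ℝ (fun y => u y ^ (-(1 / a)) - A * ‖y - b‖ ^ 2) x = 0 := by
    intro x
    rw [((hv x).fun_sub (hq x)).fderiv]
    have key : ∀ θ : 𝔼, ‖θ‖ = 1 → ((-(1 / a) * u x ^ (-(1 / a) - 1)) • fderiv ℝ u x
        - A • (2 • (innerSL ℝ (x - b)))) θ = 0 := by
      intro θ hθ
      have := h x θ hθ
      simp only [sub_apply, smul_apply, smul_eq_mul, nsmul_eq_mul,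
        innerSL_apply_apply, Nat.cast_ofNat]
      rw [this]; ring
    ext z
    by_cases hz : z = 0
    · rw [hz, map_zero, map_zero]
    · have h1 : ‖(‖z‖⁻¹ • z)‖ = 1 := norm_smul_inv_norm (𝕜 := ℝ) hz
      have h2 := key _ h1
      rw [map_smul, smul_eq_mul] at h2
      exact (mul_eq_zero.1 h2).resolve_left (inv_ne_zero (norm_ne_zero_iff.2 hz))
  have hd : Differentiable ℝ (fun y => u y ^ (-(1 / a)) - A * ‖y - b‖ ^ 2) := fun x =>
    ((hv x).fun_sub (hq x)).differentiableAt
  have hc := is_const_of_fderiv_eq_zero hd hz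
  refine ⟨A, hA, u b ^ (-(1 / a)), Real.rpow_pos_of_pos (hu.pos b) _, b, fun x => ?_⟩
  have h1 := hc x b
  simp only [sub_self, norm_zero] at h1
  have h2 : A * ‖x - b‖ ^ 2 + u b ^ (-(1 / a)) = u x ^ (-(1 / a)) := by linarith
  rw [h2, ← Real.rpow_mul (hu.pos x).le]
  have : -(1 / a) * -a = 1 := by field_simp
  rw [this, Real.rpow_one]

lemma final (hn : 3 ≤ n) {u : 𝔼 → ℝ} (hu : Sol u) :
    ∃ lam > (0 : ℝ), ∃ x₀ : 𝔼,
      ∀ x, u x = lam ^ (((n : ℝ) - 2) / 2)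
        * (1 + lam ^ 2 * ‖x - x₀‖ ^ 2) ^ (-(((n : ℝ) - 2) / 2)) := by
  have hn' : (3:ℝ) ≤ n := by exact_mod_cast hn
  obtain ⟨A, hA, C, hC, b, h⟩ := v_form hn hu
  obtain ⟨a, ha⟩ : ∃ a, a = ((n:ℝ) - 2) / 2 := ⟨_, rfl⟩
  have hap : 0 < a := by rw [ha]; linarith
  have hs := hu.shift b
  have hfun : (fun y => u (b + y)) = fun y : 𝔼 => (fun s : ℝ => (A * s + C) ^ (-a)) (‖y‖ ^ 2) := by
    funext y
    rw [h, add_sub_cancel_left, ha]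
  have he := hs.eq 0
  have hsm := hs.smooth
  rw [hfun] at hsm
  have hub : u (b + 0) = C ^ (-a) := by
    have := congrFun hfun 0
    simpa using this
  have hlin : ∀ s : ℝ, HasDerivAt (fun s : ℝ => A * s + C) A s := fun s => by
    simpa using ((hasDerivAt_id s).const_mul A).add_const C
  have h0 : A * ‖(0:𝔼)‖ ^ 2 + C ≠ 0 := by simp [hC.ne']
  have hL := lap_radial (F := fun s : ℝ => (A * s + C) ^ (-a))
    (F' := fun s => A * (-a) * (A * s + C) ^ (-a - 1))
    (F'' := A * (-a) * (A * (-a - 1) * (A * ‖(0:𝔼)‖ ^ 2 + C) ^ (-a - 1 - 1))) (x := (0:𝔼))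
    hsm.contDiffAt (by
      have : ∀ᶠ s in 𝓝 (‖(0:𝔼)‖ ^ 2), A * s + C ≠ 0 :=
        (hlin _).continuousAt.eventually_ne h0
      filter_upwards [this] with s hs
      exact (hlin s).rpow_const (Or.inl hs))
    (((hlin _).rpow_const (Or.inl h0)).const_mul _)
  have he2 : lap (fun y => u (b + y)) 0 = -((n:ℝ)*((n:ℝ)-2)*(C ^ (-a)) ^ (((n:ℝ)+2)/((n:ℝ)-2))) := by
    rw [← hub]; exact he
  rw [hfun, hL, ← Real.rpow_mul hC.le] at he2
  have hexp : -a * (((n:ℝ)+2)/((n:ℝ)-2)) = -a - 1 - 1 := by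
    have : (n:ℝ) - 2 ≠ 0 := by linarith
    rw [ha]; field_simp; ring
  rw [hexp, Real.rpow_sub_one hC.ne' (-a - 1)] at he2
  simp only [norm_zero, ne_eq, OfNat.ofNat_ne_zero, not_false_eq_true, zero_pow, mul_zero,
    zero_mul, zero_add] at he2
  have hR : 0 < C ^ (-a - 1) := by positivity
  have hAC : A * C = 1 := by
    have h2a : (n:ℝ) - 2 = 2 * a := by rw [ha]; ring
    have hnp : (0:ℝ) < n := by linarith
    rw [h2a] at he2
    generalize C ^ (-a - 1) = R at he2 hR
    field_simp at he2
    nlinarith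
  refine ⟨A, hA, b, fun x => ?_⟩
  rw [h, ← ha]
  have h1 : A * ‖x - b‖ ^ 2 + C = A⁻¹ * (1 + A ^ 2 * ‖x - b‖ ^ 2) := by
    have : C = A⁻¹ := eq_inv_of_mul_eq_one_right hAC
    rw [this]; field_simp; ring
  rw [h1, Real.mul_rpow (by positivity) (by positivity), Real.inv_rpow hA.le,
    Real.rpow_neg hA.le, inv_inv]

end CritRig

/-- Classification of positive smooth solutions of the critical equation
`-Δu = n(n-2)u^{(n+2)/(n-2)}` on `ℝⁿ` (Obata-type rigidity): every solution is a
standard bubble `u(x) = λ^{(n-2)/2}(1+λ²|x-x₀|²)^{-(n-2)/2}`. -/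
theorem critical_equation_rigidity
    (n : ℕ) (hn : 3 ≤ n)
    (u : EuclideanSpace ℝ (Fin n) → ℝ)
    (hu : ContDiff ℝ (⊤ : ℕ∞) u) (hpos : ∀ x, 0 < u x)
    (heq : ∀ x, -(lap u x)
      = (n : ℝ) * ((n : ℝ) - 2) * u x ^ (((n : ℝ) + 2) / ((n : ℝ) - 2))) :
    ∃ lam > (0 : ℝ), ∃ x₀ : EuclideanSpace ℝ (Fin n),
      ∀ x, u x = lam ^ (((n : ℝ) - 2) / 2)
        * (1 + lam ^ 2 * ‖x - x₀‖ ^ 2) ^ (-(((n : ℝ) - 2) / 2)) := by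
  have hS : CritRig.Sol u :=
    { smooth := by exact_mod_cast contDiff_infty.1 hu 2
      pos := hpos
      eq := fun x => by rw [← heq x, neg_neg] }
  exact CritRig.final hn hS
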